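/- arXiv:1501.03377 — 2 statements merged into one kernel-verified Lean document; each statement's English description precedes it below -/
import Mathlib

section
/- Let (G,x,y) encode a reflexive regular map that is simple, satisfies 2q² > |G| (density exceeding 1/2), has p = 3, and is not the tetrahedral map tet, and suppose the even period satisfies T = q. Then (G,x,y) is the Fermat map Fer(1); in particular q = 2 and |G| = 6. -/
namespace RegularMap

variable {G : Type*} [Group G]

/-- The vertex set of the map: left cosets of the cyclic subgroup generated by `y`. -/
abbrev Vertex (y : G) : Type _ := G ⧸ Subgroup.zpowers y

/-- The rotation about the vertex `v = g⟨y⟩`, namely `g * y * g⁻¹`. -/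
def rot (y : G) (v : Vertex y) : G :=
  Quotient.liftOn' v (fun g => g * y * g⁻¹) (by
    intro a b h
    obtain ⟨k, hk⟩ := QuotientGroup.leftRel_apply.mp h
    have hk' : y ^ k = a⁻¹ * b := hk
    have hb : b = a * y ^ k := by rw [hk']; group
    subst hb
    group)

/-- Two vertices are adjacent iff they are distinct and form the endpoint pair of
some edge `g⟨x*y⟩`, whose endpoints are `g⟨y⟩` and `g*x*y⟨y⟩`. -/
def Adj (x y : G) (v w : Vertex y) : Prop :=
  v ≠ w ∧ ∃ g : G,
    ({v, w} : Set (Vertex y)) = {QuotientGroup.mk g, QuotientGroup.mk (g * x * y)}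

/-- The map is simple: no edge has equal endpoints, and distinct edges (left cosets
of `⟨x*y⟩`) have distinct endpoint pairs. -/
def IsSimple (x y : G) : Prop :=
  (∀ g : G, (QuotientGroup.mk g : Vertex y) ≠ QuotientGroup.mk (g * x * y)) ∧
  ∀ g h : G,
    ({QuotientGroup.mk g, QuotientGroup.mk (g * x * y)} : Set (Vertex y)) =
      {QuotientGroup.mk h, QuotientGroup.mk (h * x * y)} →
    (QuotientGroup.mk g : G ⧸ Subgroup.zpowers (x * y)) = QuotientGroup.mk h

/-- The map is reflexive: some group automorphism inverts both `x` and `y`. -/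
def IsReflexive (x y : G) : Prop :=
  ∃ σ : G ≃* G, σ x = x⁻¹ ∧ σ y = y⁻¹

/-- An automorphism of the map (given a reflection σ): either orientation preserving,
`g⟨y⟩ ↦ a*g⟨y⟩`, or orientation reversing, `g⟨y⟩ ↦ a*σ(g)⟨y⟩`. -/
def IsMapAut (y : G) (σ : G ≃* G) (φ : Vertex y → Vertex y) : Prop :=
  (∃ a : G, ∀ g : G, φ (QuotientGroup.mk g) = QuotientGroup.mk (a * g)) ∨
  (∃ a : G, ∀ g : G, φ (QuotientGroup.mk g) = QuotientGroup.mk (a * σ g))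

/-- `v'` is a diagonal neighbour of `v`: `v' = S_w² • v` for some vertex `w` adjacent to `v`. -/
def DiagNeighbor (x y : G) (v v' : Vertex y) : Prop :=
  ∃ w : Vertex y, Adj x y v w ∧ v' = rot y w ^ 2 • v

/-- Diagonal alignment: the reflexive-transitive closure of the diagonal-neighbour relation. -/
def Aligned (x y : G) : Vertex y → Vertex y → Prop :=
  Relation.ReflTransGen (DiagNeighbor x y)

/-- The primitive period `J`: the least `j ≥ 1` such that `S_v^j` fixes every vertex
diagonally aligned with `v` (this is independent of `v`). -/
noncomputable def primPeriod (x y : G) : ℕ :=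
  sInf {j : ℕ | 1 ≤ j ∧ ∀ v v' : Vertex y, Aligned x y v v' → rot y v ^ j • v' = v'}

/-- The even period `T = lcm(J, 2)`. -/
noncomputable def evenPeriod (x y : G) : ℕ := Nat.lcm (primPeriod x y) 2

/-- Relators of the tetrahedral group ⟨X,Y ∣ X³, Y³, (XY)²⟩. -/
def tetRels : Set (FreeGroup (Fin 2)) :=
  {FreeGroup.of 0 ^ 3, FreeGroup.of 1 ^ 3, (FreeGroup.of 0 * FreeGroup.of 1) ^ 2}

/-- Relators of the Fermat group ⟨X,Y ∣ X³, Y^(2n), (XY)², [X,Y]³⟩. -/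
def fermatRels (n : ℕ) : Set (FreeGroup (Fin 2)) :=
  {FreeGroup.of 0 ^ 3, FreeGroup.of 1 ^ (2 * n), (FreeGroup.of 0 * FreeGroup.of 1) ^ 2,
    (FreeGroup.of 0 * FreeGroup.of 1 * (FreeGroup.of 0)⁻¹ * (FreeGroup.of 1)⁻¹) ^ 3}

/-- `(G,x,y)` is the tetrahedral map: the canonical homomorphism from the presented
group ⟨X,Y ∣ X³, Y³, (XY)²⟩ sending X to x and Y to y is an isomorphism. -/
def IsTet (G : Type*) [Group G] (x y : G) : Prop :=
  ∃ e : PresentedGroup tetRels ≃* G,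
    e (PresentedGroup.of 0) = x ∧ e (PresentedGroup.of 1) = y

/-- `(G,x,y)` is the Fermat map `Fer(n)`: the canonical homomorphism from the Fermat
group `G_n` sending X to x and Y to y is an isomorphism. -/
def IsFermat (n : ℕ) (G : Type*) [Group G] (x y : G) : Prop :=
  ∃ e : PresentedGroup (fermatRels n) ≃* G,
    e (PresentedGroup.of 0) = x ∧ e (PresentedGroup.of 1) = y

/-!
Count vertices by `⟨y⟩`-orbits. Simplicity makes the orbit of the neighbour `x⟨y⟩` of the base
vertex regular, of size `q`, and `2q² > |G|` says that there are fewer than `2q` vertices. By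
reflexivity the diagonal neighbour `t⟨y⟩`, `t = x * y⁻¹ * x`, lies in that orbit only if
`y ^ 3 = 1`, which is impossible for even `q`; so the orbit of `t⟨y⟩` has size `d < q`. The
primitive period is at most `d`, and `d` divides `q = lcm(J, 2)`, hence `d = J` is odd and `q = 2d`.

If `d = 1`, then `G` is dihedral of order `6`. If `d > 1`, the involution `u = y ^ d` commutes with
`t`, and its conjugates `u`, `b = x * u * x⁻¹`, `c = x⁻¹ * u * x` generate a symmetric group `S₃`
normalised by `x` and `y`. Multiplying `x` and `y` by elements of this `S₃` gives elements
`b * u * x` and `y * u` of its centraliser, which generate a group `K` with `6|K| ≤ |G|`. They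
encode a reflexive map with triangular faces and vertex degree `d` in which both orbits above are
regular, so the same count yields `4d² ≤ 3|K|`. Hence `|G| ≥ 8d² = 2q²`, a contradiction.
-/

section GroupTheory

theorem natCard_orbit_zpowers {α : Type*} [MulAction G α] (a : G) (v : α) :
    Nat.card (MulAction.orbit (Subgroup.zpowers a) v) = MulAction.period a v := by
  rw [Nat.card_congr (MulAction.orbitZPowersEquiv a v), Nat.card_zmod,
    MulAction.period_eq_minimalPeriod]

theorem period_add_period_le_natCard {α : Type*} [MulAction G α] [Finite α] {a : G} {v w : α}
    (h : w ∉ MulAction.orbit (Subgroup.zpowers a) v) :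
    MulAction.period a v + MulAction.period a w ≤ Nat.card α := by
  have hdisj : Disjoint (MulAction.orbit (Subgroup.zpowers a) v)
      (MulAction.orbit (Subgroup.zpowers a) w) :=
    (MulAction.orbit.eq_or_disjoint v w).resolve_left fun e => h (e ▸ MulAction.mem_orbit_self w)
  rw [← natCard_orbit_zpowers, ← natCard_orbit_zpowers, Nat.card_coe_set_eq, Nat.card_coe_set_eq,
    ← Set.ncard_union_eq hdisj]
  exact Set.ncard_le_card _

theorem prime_mul_natCard_le {H K : Subgroup G} [Finite K] (hHK : H ≤ K) {g : G}
    (hg : (orderOf g).Prime) (hgK : g ∈ K) (hgH : g ∉ H) :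
    orderOf g * Nat.card H ≤ Nat.card K := by
  have : Fact (Nat.card (Subgroup.zpowers g)).Prime := ⟨by rwa [Nat.card_zpowers]⟩
  have hdisj : Disjoint (Subgroup.zpowers g) H := by
    rw [disjoint_comm, ← Subgroup.subgroupOf_eq_bot]
    refine (H.subgroupOf (Subgroup.zpowers g)).eq_bot_or_eq_top_of_prime_card.resolve_right ?_
    rw [Subgroup.subgroupOf_eq_top, Subgroup.zpowers_le]
    exact hgH
  have hinj : Function.Injective
      fun p : Subgroup.zpowers g × H => (⟨p.1 * p.2, mul_mem
        (Subgroup.zpowers_le.mpr hgK p.1.2) (hHK p.2.2)⟩ : K) := fun p p' e =>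
    Subgroup.mul_injective_of_disjoint hdisj (congrArg Subtype.val e)
  rw [← Nat.card_zpowers, ← Nat.card_prod]
  exact Nat.card_le_card_of_injective _ hinj

theorem commute_of_mem_normalizer_zpowers {z g : G} (hz : z ^ 2 = 1)
    (hg : g ∈ Subgroup.normalizer (Subgroup.zpowers z : Set G)) : Commute g z := by
  obtain ⟨n, hn : z ^ n = g * z * g⁻¹⟩ :=
    (Subgroup.mem_normalizer_iff.mp hg z).mp (Subgroup.mem_zpowers z)
  have hz' : z ^ (2 : ℤ) = 1 := mod_cast hz
  have hconj : SemiconjBy g z (z ^ n) := hn ▸ SemiconjBy.conj_mk g z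
  rcases Int.even_or_odd' n with ⟨m, rfl | rfl⟩
  · rw [zpow_mul, hz', one_zpow] at hconj
    rw [hconj.eq_one_iff.mpr rfl]
    exact Commute.one_right g
  · rwa [zpow_add_one, zpow_mul, hz', one_zpow, one_mul] at hconj

theorem semiconjBy_pow_of_odd {a b c : G} (hb : SemiconjBy a b c) (hc : SemiconjBy a c b) {k : ℕ}
    (hk : Odd k) : SemiconjBy (a ^ k) b c := by
  obtain ⟨m, rfl⟩ := hk
  have hsq : Commute (a ^ 2) b := pow_two a ▸ hc.mul_left hb
  rw [pow_succ', pow_mul]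
  exact hb.mul_left (hsq.pow_left m)

open scoped Pointwise in
theorem zpowers_mul_zpowers_eq_univ {a b : G} (hgen : Subgroup.closure {a, b} = ⊤)
    (hab : SemiconjBy b a a⁻¹) :
    (Subgroup.zpowers a : Set G) * (Subgroup.zpowers b : Set G) = Set.univ := by
  have : (Subgroup.zpowers a).Normal := by
    rw [← Subgroup.normalizer_eq_top_iff, eq_top_iff, ← hgen, Subgroup.closure_le]
    rintro g (rfl | rfl)
    · exact Subgroup.le_normalizer (Subgroup.mem_zpowers g)
    · rw [SetLike.mem_coe, Subgroup.mem_normalizer_iff_map_conj_eq, MonoidHom.map_zpowers,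
        MonoidHom.coe_coe, MulAut.conj_apply, mul_inv_eq_iff_eq_mul.mpr hab.eq,
        Subgroup.zpowers_inv]
  rw [← Subgroup.normal_mul, Subgroup.zpowers_eq_closure, Subgroup.zpowers_eq_closure,
    ← Subgroup.closure_union, Set.singleton_union, hgen, Subgroup.coe_top]

theorem odd_and_eq_two_mul_of_lcm_two {j d q : ℕ} (hlcm : j.lcm 2 = q) (hjd : j ≤ d) (hdq : d ∣ q)
    (hlt : d < q) : Odd d ∧ q = 2 * d := by
  obtain ⟨c, rfl⟩ := hdq
  have hc : 2 ≤ c := by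
    by_contra! hc
    interval_cases c <;> simp_all
  have hodd : Odd j := by
    by_contra heven
    rw [Nat.lcm_eq_left (even_iff_two_dvd.mp (Nat.not_odd_iff_even.mp heven))] at hlcm
    omega
  rw [Nat.Coprime.lcm_eq_mul (Nat.coprime_two_right.mpr hodd)] at hlcm
  have hjd' : j = d := by nlinarith
  exact ⟨hjd' ▸ hodd, by rw [← hlcm, hjd', mul_comm]⟩

theorem orderOf_pow_succ_of_odd {y : G} {k : ℕ} (hk : Odd k) (hy : orderOf y = 2 * k) :
    orderOf (y ^ (k + 1)) = k := by
  have hgcd : (2 * k).gcd (k + 1) = 2 := by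
    obtain ⟨m, rfl⟩ := hk
    have hcop : (2 * m + 1).Coprime (m + 1) := by
      rw [show 2 * m + 1 = m + 1 + m by ring, Nat.coprime_self_add_left,
        Nat.coprime_self_add_right]
      exact Nat.coprime_one_right m
    rw [show 2 * m + 1 + 1 = 2 * (m + 1) by ring, Nat.gcd_mul_left, hcop.gcd_eq_one, mul_one]
  rw [orderOf_pow' y k.succ_ne_zero, hy, hgcd, Nat.mul_div_cancel_left k two_pos]

theorem two_mul_dvd_lcm_succ {k : ℕ} (hk : Odd k) : 2 * k ∣ k.lcm (k + 1) :=
  (Nat.coprime_two_left.mpr hk).mul_dvd_of_dvd_of_dvd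
    ((even_iff_two_dvd.mp hk.add_one).trans (Nat.dvd_lcm_right k _)) (Nat.dvd_lcm_left k _)

end GroupTheory

section Vertices

theorem zpow_smul_vertex_eq_iff {y g : G} {n : ℤ} :
    y ^ n • (g : Vertex y) = g ↔ ∃ m : ℤ, y ^ n * g = g * y ^ m := by
  rw [MulAction.Quotient.smul_coe, smul_eq_mul, eq_comm, QuotientGroup.eq,
    Subgroup.mem_zpowers_iff]
  exact exists_congr fun m => by rw [eq_inv_mul_iff_mul_eq, eq_comm]

theorem mem_orbit_vertex_iff {y g h : G} :
    (h : Vertex y) ∈ MulAction.orbit (Subgroup.zpowers y) (g : Vertex y) ↔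
      ∃ i j : ℤ, h = y ^ i * g * y ^ j := by
  constructor
  · rintro ⟨⟨_, i, rfl⟩, hi : ((y ^ i * g : G) : Vertex y) = h⟩
    obtain ⟨j, hj : y ^ j = (y ^ i * g)⁻¹ * h⟩ := QuotientGroup.eq.mp hi
    exact ⟨i, j, by rw [hj, mul_inv_cancel_left]⟩
  · rintro ⟨i, j, rfl⟩
    refine ⟨⟨y ^ i, i, rfl⟩, QuotientGroup.eq.mpr ⟨j, ?_⟩⟩
    exact (inv_mul_cancel_left (y ^ i * g) (y ^ j)).symm

theorem natCard_vertex_mul_orderOf (y : G) : Nat.card (Vertex y) * orderOf y = Nat.card G := by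
  rw [← Nat.card_zpowers, ← Subgroup.card_eq_card_quotient_mul_card_subgroup]

/-- The rotation group `⟨y⟩` about the base vertex acts freely on the orbit of the vertex `g⟨y⟩`,
that is, `⟨y⟩ ∩ g⟨y⟩g⁻¹` is trivial. -/
def IsFreeAt (y g : G) : Prop :=
  ∀ n m : ℤ, y ^ n * g = g * y ^ m → y ^ n = 1

namespace IsFreeAt

variable {y g a z : G}

theorem period_eq (h : IsFreeAt y g) : MulAction.period y (g : Vertex y) = orderOf y := by
  refine Nat.dvd_antisymm (MulAction.period_dvd_orderOf y _) ?_
  obtain ⟨m, hm⟩ := zpow_smul_vertex_eq_iff.mp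
    (MulAction.zpow_smul_eq_iff_period_dvd.mpr dvd_rfl :
      y ^ (MulAction.period y (g : Vertex y) : ℤ) • (g : Vertex y) = g)
  exact Int.natCast_dvd_natCast.mp (orderOf_dvd_iff_zpow_eq_one.mpr (h _ m hm))

theorem of_injective {H : Type*} [Group H] {f : H →* G} (hf : Function.Injective f) {y g : H}
    (h : IsFreeAt (f y) (f g)) : IsFreeAt y g := by
  intro n m e
  have hfe := congrArg f e
  simp only [map_mul, map_zpow] at hfe
  exact hf (by rw [map_zpow, map_one, h n m hfe])

theorem mono (h : IsFreeAt y g) (hz : z ∈ Subgroup.zpowers y) : IsFreeAt z g := by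
  obtain ⟨k, rfl⟩ := hz
  intro n m e
  simp only [← zpow_mul] at e ⊢
  exact h _ _ e

theorem mul_left (h : IsFreeAt y g) (ha : Commute a y) : IsFreeAt y (a * g) := by
  intro n m e
  rw [← mul_assoc, ← (ha.zpow_right n).eq, mul_assoc, mul_assoc] at e
  exact h n m (mul_left_cancel e)

end IsFreeAt

theorem isFreeAt_pow {y g : G} {a : ℕ}
    (h : orderOf y ∣ (MulAction.period y (g : Vertex y)).lcm a) : IsFreeAt (y ^ a) g := by
  intro n m e
  simp only [← zpow_natCast, ← zpow_mul] at e ⊢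
  rw [← orderOf_dvd_iff_zpow_eq_one]
  refine (Int.natCast_dvd_natCast.mpr h).trans
    (Int.natCast_dvd.mpr (Nat.lcm_dvd ?_ (Int.natCast_dvd.mp (dvd_mul_right _ _))))
  exact Int.natCast_dvd.mp <|
    MulAction.zpow_smul_eq_iff_period_dvd.mp (zpow_smul_vertex_eq_iff.mpr ⟨_, e⟩)

theorem IsSimple.isFreeAt {x y : G} (hs : IsSimple x y) (hxy : (x * y) ^ 2 = 1) :
    IsFreeAt y x := by
  intro n m h
  have hx : x ∉ Subgroup.zpowers y := fun hx =>
    hs.1 1 (QuotientGroup.eq.mpr (by simpa using mul_mem hx (Subgroup.mem_zpowers y)))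
  have hedge : ((y ^ n : G) : G ⧸ Subgroup.zpowers (x * y)) = (1 : G) := by
    have htail : ((y ^ n : G) : Vertex y) = (1 : G) := QuotientGroup.eq.mpr ⟨-n, by group⟩
    have hhead : ((y ^ n * x * y : G) : Vertex y) = (1 * x * y : G) :=
      QuotientGroup.eq.mpr ⟨-m, by rw [h]; group⟩
    exact hs.2 (y ^ n) 1 (by rw [htail, hhead])
  obtain ⟨k, hk : (x * y) ^ k = (y ^ n)⁻¹ * 1⟩ := QuotientGroup.eq.mp hedge
  have hxy' : (x * y) ^ (2 : ℤ) = 1 := mod_cast hxy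
  rcases Int.even_or_odd' k with ⟨l, rfl | rfl⟩
  · rwa [zpow_mul, hxy', one_zpow, mul_one, eq_comm, inv_eq_one] at hk
  · rw [zpow_add_one, zpow_mul, hxy', one_zpow, one_mul, mul_one, ← zpow_neg] at hk
    exact absurd ⟨_, (zpow_sub_one y _).trans (by rw [← hk, mul_inv_cancel_right])⟩ hx

end Vertices

section Reflexive

/-- The word `x * y⁻¹ * x`: when all faces are triangles, the diagonal neighbours of the base
vertex are the vertices `y ^ n * diagonal x y⟨y⟩`. -/
def diagonal (x y : G) : G := x * y⁻¹ * x

theorem map_diagonal {F H : Type*} [Group H] [FunLike F G H] [MonoidHomClass F G H] (f : F)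
    (x y : G) : f (diagonal x y) = diagonal (f x) (f y) := by
  simp only [diagonal, map_mul, map_inv]

variable {x y : G}

theorem mul_eq_inv_mul_inv_of_sq_eq_one (hxy : (x * y) ^ 2 = 1) : x * y = y⁻¹ * x⁻¹ := by
  rw [← mul_inv_rev, eq_inv_iff_mul_eq_one, ← pow_two, hxy]

theorem mul_swap_eq_inv_mul_inv_of_sq_eq_one (hxy : (x * y) ^ 2 = 1) : y * x = x⁻¹ * y⁻¹ := by
  calc y * x = x⁻¹ * (x * y) * x := by group
    _ = x⁻¹ * y⁻¹ := by rw [mul_eq_inv_mul_inv_of_sq_eq_one hxy]; group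

theorem inv_mul_inv_of_pow_three_eq_one (hx : x ^ 3 = 1) : x⁻¹ * x⁻¹ = x := by
  rw [← mul_inv_rev, inv_eq_iff_mul_eq_one, ← hx, pow_succ, pow_two]

theorem diagonal_inv_inv (hx : x ^ 3 = 1) (hxy : (x * y) ^ 2 = 1) :
    diagonal x⁻¹ y⁻¹ = diagonal x y := by
  calc x⁻¹ * y⁻¹⁻¹ * x⁻¹ = x⁻¹ * x⁻¹ * (x * y) * x⁻¹ := by group
    _ = x⁻¹ * x⁻¹ * y⁻¹ * (x⁻¹ * x⁻¹) := by
      rw [mul_eq_inv_mul_inv_of_sq_eq_one hxy]; group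
    _ = x * y⁻¹ * x := by rw [inv_mul_inv_of_pow_three_eq_one hx]

theorem conj_sq_eq_inv_mul_diagonal (hx : x ^ 3 = 1) (hxy : (x * y) ^ 2 = 1) :
    x * y ^ 2 * x⁻¹ = y⁻¹ * diagonal x y := by
  calc x * y ^ 2 * x⁻¹ = x * y * (y * x⁻¹) := by rw [pow_two]; group
    _ = y⁻¹ * (x⁻¹ * y⁻¹⁻¹ * x⁻¹) := by rw [mul_eq_inv_mul_inv_of_sq_eq_one hxy]; group
    _ = y⁻¹ * diagonal x y := by rw [← diagonal_inv_inv hx hxy, diagonal]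

theorem commute_pow_three_of_mul_mul_eq {c : G} (h : c * x * c = x⁻¹ * c ^ 2 * x⁻¹) :
    Commute (c ^ 3) x := by
  rw [← Commute.inv_right_iff]
  calc c ^ 3 * x⁻¹ = c * x * (x⁻¹ * c ^ 2 * x⁻¹) := by rw [pow_succ', pow_two]; group
    _ = c * x * c * x * c := by rw [← h]; simp only [mul_assoc]
    _ = x⁻¹ * c ^ 3 := by rw [h, pow_succ]; group

-- The reflection fixes the diagonal; comparing `h` with its image shows that `y ^ i = y ^ j` is a
-- square root of `y`, whose cube then commutes with `x`.
theorem IsReflexive.pow_three_eq_one (hr : IsReflexive x y) (hx : x ^ 3 = 1)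
    (hxy : (x * y) ^ 2 = 1) (hfree : IsFreeAt y x) {i j : ℤ}
    (h : diagonal x y = y ^ i * x * y ^ j) : y ^ 3 = 1 := by
  obtain ⟨σ, hσx, hσy⟩ := hr
  have hσ : y ^ i * x * y ^ j = y ^ (1 - i) * x * y ^ (1 - j) := by
    calc y ^ i * x * y ^ j = diagonal x⁻¹ y⁻¹ := by rw [diagonal_inv_inv hx hxy, h]
      _ = σ (y ^ i * x * y ^ j) := by rw [← h, map_diagonal, hσx, hσy]
      _ = (y ^ i)⁻¹ * x⁻¹ * (y ^ j)⁻¹ := by simp only [map_mul, map_zpow, hσx, hσy, inv_zpow]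
      _ = (y ^ i)⁻¹ * (y * (x * y)) * (y ^ j)⁻¹ := by
        rw [mul_eq_inv_mul_inv_of_sq_eq_one hxy, mul_inv_cancel_left]
      _ = y ^ (1 - i) * x * y ^ (1 - j) := by group
  have hcomm : y ^ (2 * i - 1) * x = x * y ^ (1 - 2 * j) := by
    calc y ^ (2 * i - 1) * x = y ^ (i - 1) * (y ^ i * x * y ^ j) * y ^ (-j) := by group
      _ = x * y ^ (1 - 2 * j) := by rw [hσ]; group
  have hi : y ^ (2 * i - 1) = 1 := hfree _ _ hcomm
  have hj : y ^ (2 * j - 1) = 1 := by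
    rw [hi, one_mul, left_eq_mul] at hcomm
    rw [← neg_sub, zpow_neg, hcomm, inv_one]
  have hij : y ^ i = y ^ j := by
    rw [show i = j + ((2 * i - 1) * j - (2 * j - 1) * i) by ring, zpow_add, zpow_sub, zpow_mul,
      zpow_mul, hi, hj, one_zpow, one_zpow, inv_one, mul_one, mul_one]
  have hsq : (y ^ i) ^ 2 = y := by
    calc (y ^ i) ^ 2 = y ^ (2 * i - 1) * y := by group
      _ = y := by rw [hi, one_mul]
  have hcube : (y ^ i) ^ 3 = 1 := by
    have hc := commute_pow_three_of_mul_mul_eq (c := y ^ i) (x := x) (by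
      rw [hsq]; nth_rewrite 2 [hij]; rw [← h, ← diagonal_inv_inv hx hxy, diagonal, inv_inv])
    rw [← zpow_natCast, ← zpow_mul] at hc ⊢
    exact hfree _ _ hc.eq
  rw [← hsq, ← pow_mul, mul_comm, pow_mul, hcube, one_pow]

theorem IsReflexive.orderOf_add_period_diagonal_le [Finite (Vertex y)]
    (hr : IsReflexive x y) (hx : x ^ 3 = 1) (hxy : (x * y) ^ 2 = 1) (hfree : IsFreeAt y x)
    (hy : y ^ 3 ≠ 1) :
    orderOf y + MulAction.period y ((diagonal x y : G) : Vertex y) ≤ Nat.card (Vertex y) := by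
  rw [← hfree.period_eq]
  refine period_add_period_le_natCard fun h => hy ?_
  obtain ⟨i, j, hij⟩ := mem_orbit_vertex_iff.mp h
  exact hr.pow_three_eq_one hx hxy hfree hij

theorem IsReflexive.four_mul_orderOf_sq_le [Finite G] (hr : IsReflexive x y)
    (hx : x ^ 3 = 1) (hxy : (x * y) ^ 2 = 1) (hy : y ≠ 1) (hfree : IsFreeAt y x)
    (hdiag : IsFreeAt y (diagonal x y)) : 4 * orderOf y ^ 2 ≤ 3 * Nat.card G := by
  rw [← natCard_vertex_mul_orderOf y]
  by_cases hy3 : y ^ 3 = 1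
  · have hle : MulAction.period y ((1 : G) : Vertex y) + MulAction.period y (x : Vertex y) ≤
        Nat.card (Vertex y) := by
      refine period_add_period_le_natCard fun h => hy ?_
      obtain ⟨i, j, hij⟩ := mem_orbit_vertex_iff.mp h
      have hcomm : y ^ (1 : ℤ) * x = x * y ^ (1 : ℤ) := by rw [hij]; group
      simpa only [zpow_one] using hfree 1 1 hcomm
    have hpos := MulAction.period_pos_of_orderOf_pos (orderOf_pos y) ((1 : G) : Vertex y)
    rw [hfree.period_eq, orderOf_eq_prime hy3 hy] at hle
    rw [orderOf_eq_prime hy3 hy]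
    linarith
  · have hle := hr.orderOf_add_period_diagonal_le hx hxy hfree hy3
    rw [hdiag.period_eq] at hle
    nlinarith

theorem IsReflexive.closure (hr : IsReflexive x y) :
    IsReflexive (G := Subgroup.closure {x, y}) ⟨x, Subgroup.subset_closure (Or.inl rfl)⟩
      ⟨y, Subgroup.subset_closure (Or.inr rfl)⟩ := by
  obtain ⟨σ, hσx, hσy⟩ := hr
  have hmap : (Subgroup.closure {x, y}).map σ.toMonoidHom = Subgroup.closure {x, y} := by
    rw [MonoidHom.map_closure, ← Subgroup.closure_inv {x, y}]
    congr 1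
    simp [Set.image_pair, hσx, hσy]
  exact ⟨(σ.subgroupMap _).trans (MulEquiv.subgroupCongr hmap), Subtype.ext hσx,
    Subtype.ext hσy⟩

end Reflexive

section Alignment

variable {x y : G}

theorem Adj.exists_eq (hxy : (x * y) ^ 2 = 1) {v w : Vertex y} (h : Adj x y v w) :
    ∃ f : G, v = f ∧ w = (f * x * y : G) := by
  obtain ⟨-, e, he⟩ := h
  rcases Set.pair_eq_pair_iff.mp he with ⟨hv, hw⟩ | ⟨hv, hw⟩
  · exact ⟨e, hv, hw⟩
  · refine ⟨e * x * y, hv, ?_⟩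
    have hback : e * x * y * x * y = e := by
      rw [mul_assoc e, mul_assoc, mul_assoc e, ← pow_two, hxy, mul_one]
    rw [hw, hback]

theorem DiagNeighbor.exists_eq (hx : x ^ 3 = 1) (hxy : (x * y) ^ 2 = 1) {g : G} {v : Vertex y}
    (h : DiagNeighbor x y g v) : ∃ n : ℤ, v = (g * (y ^ n * diagonal x y) : G) := by
  obtain ⟨w, hadj, rfl⟩ := h
  obtain ⟨f, hgf, rfl⟩ := hadj.exists_eq hxy
  obtain ⟨n, hn : y ^ n = g⁻¹ * f⟩ := QuotientGroup.eq.mp hgf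
  obtain rfl : f = g * y ^ n := by rw [hn, mul_inv_cancel_left]
  refine ⟨n - 1, ?_⟩
  rw [hgf]
  change ((_ : G) : Vertex y) = _
  congr 1
  calc (g * y ^ n * x * y * y * (g * y ^ n * x * y)⁻¹) ^ 2 * (g * y ^ n)
      = g * y ^ n * (x * y ^ 2 * x⁻¹) := by rw [conj_pow]; group
    _ = g * (y ^ (n - 1) * diagonal x y) := by
      rw [conj_sq_eq_inv_mul_diagonal hx hxy]; group

theorem Aligned.exists_eq (hx : x ^ 3 = 1) (hxy : (x * y) ^ 2 = 1) {N : Subgroup G} (hyN : y ∈ N)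
    (htN : diagonal x y ∈ N) {g : G} {v : Vertex y} (h : Aligned x y g v) :
    ∃ l ∈ N, v = (g * l : G) := by
  induction h with
  | refl => exact ⟨1, one_mem N, by rw [mul_one]⟩
  | tail _ hd ih =>
    obtain ⟨l, hl, rfl⟩ := ih
    obtain ⟨n, rfl⟩ := hd.exists_eq hx hxy
    exact ⟨_, mul_mem hl (mul_mem (zpow_mem hyN n) htN), by rw [mul_assoc]⟩

theorem mem_normalizer_zpowers_pow_period (hy : IsOfFinOrder y) (g : G) :
    g ∈ Subgroup.normalizer
      (Subgroup.zpowers (y ^ MulAction.period y (g : Vertex y)) : Set G) := by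
  set d := MulAction.period y (g : Vertex y)
  obtain ⟨c, hc⟩ : d ∣ orderOf y := MulAction.period_dvd_orderOf y _
  obtain ⟨m, hm⟩ := zpow_smul_vertex_eq_iff.mp
    (MulAction.zpow_smul_eq_iff_period_dvd.mpr dvd_rfl : y ^ (d : ℤ) • (g : Vertex y) = g)
  have hconj : SemiconjBy g⁻¹ (y ^ d) (y ^ m) := by
    rw [SemiconjBy.inv_symm_left_iff, SemiconjBy, ← hm, zpow_natCast]
  have hdm : (d : ℤ) ∣ m := by
    have hmc : y ^ (m * c) = 1 := by
      rw [zpow_mul, zpow_natCast, ← (hconj.pow_right c).eq_one_iff, ← pow_mul, ← hc,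
        pow_orderOf_eq_one]
    have hdvd := orderOf_dvd_iff_zpow_eq_one.mpr hmc
    rw [hc, Nat.cast_mul] at hdvd
    refine Int.dvd_of_mul_dvd_mul_right (Nat.cast_ne_zero.mpr ?_) hdvd
    rintro rfl
    exact hy.orderOf_pos.ne' hc
  obtain ⟨k, rfl⟩ := hdm
  rw [zpow_mul, zpow_natCast] at hconj
  have : Finite (Subgroup.zpowers (y ^ d) : Set G) := hy.pow.finite_zpowers
  rw [← inv_mem_iff]
  refine Subgroup.mem_normalizer_fintype ?_
  rintro _ ⟨i, rfl⟩
  rw [(hconj.zpow_right i).eq, mul_inv_cancel_right]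
  exact zpow_mem (zpow_mem (Subgroup.mem_zpowers _) k) i

theorem primPeriod_le_period (hx : x ^ 3 = 1) (hxy : (x * y) ^ 2 = 1) (hy : IsOfFinOrder y) :
    primPeriod x y ≤ MulAction.period y ((diagonal x y : G) : Vertex y) := by
  refine Nat.sInf_le ⟨MulAction.period_pos_of_orderOf_pos hy.orderOf_pos _, ?_⟩
  intro v v' h
  set d := MulAction.period y ((diagonal x y : G) : Vertex y)
  obtain ⟨g, rfl⟩ := QuotientGroup.mk_surjective v
  have hyN : y ∈ Subgroup.normalizer (Subgroup.zpowers (y ^ d) : Set G) :=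
    Subgroup.centralizer_le_normalizer _ <| by
      rintro _ ⟨i, rfl⟩
      exact ((Commute.refl y).pow_left d).zpow_left i
  obtain ⟨l, hl, rfl⟩ := h.exists_eq hx hxy hyN (mem_normalizer_zpowers_pow_period hy _)
  change (((g * y * g⁻¹) ^ d * (g * l) : G) : Vertex y) = _
  obtain ⟨k, hk : (y ^ d) ^ k = l⁻¹ * y ^ d * l⟩ :=
    (Subgroup.mem_normalizer_iff''.mp hl _).mp (Subgroup.mem_zpowers (y ^ d))
  refine Eq.symm (QuotientGroup.eq.mpr ⟨d * k, ?_⟩)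
  change y ^ (d * k) = _
  rw [zpow_mul, zpow_natCast, hk, conj_pow]
  group

end Alignment

section CentralProduct

/-- An element `u` of the vertex stabiliser `⟨y⟩` whose conjugates `u`, `b = x * u * x⁻¹` and
`c = x⁻¹ * u * x` are the three involutions of a symmetric group `S₃` (which may degenerate to
`⟨u⟩`) normalised by `x` and `y`. In lemma names, `bux` and `yu` stand for `b * u * x` and `y * u`,
which centralise this group and encode a map of their own. -/
structure ConjTriple (x y u b c : G) : Prop where
  mem : u ∈ Subgroup.zpowers y
  u_sq : u ^ 2 = 1
  x_u : SemiconjBy x u b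
  x_b : SemiconjBy x b c
  x_c : SemiconjBy x c u
  y_c : SemiconjBy y c b
  u_b : SemiconjBy u b c
  b_c : SemiconjBy b c u

theorem conjTriple_pow {x y : G} (hx : x ^ 3 = 1) (hxy : (x * y) ^ 2 = 1) {k : ℕ} (hk : Odd k)
    (hsq : (y ^ k) ^ 2 = 1) (ht : Commute (y ^ k) (diagonal x y)) :
    ConjTriple x y (y ^ k) (x * y ^ k * x⁻¹) (x⁻¹ * y ^ k * x) := by
  set u := y ^ k
  set b := x * u * x⁻¹
  set c := x⁻¹ * u * x
  have hyu : Commute y u := (Commute.refl y).pow_right k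
  have hxu : SemiconjBy x u b := SemiconjBy.conj_mk x u
  have hux : SemiconjBy x⁻¹ b u := SemiconjBy.inv_symm_left_iff.mpr hxu
  have hcx : SemiconjBy x⁻¹ u c := by
    simpa only [inv_inv] using SemiconjBy.conj_mk x⁻¹ u
  have hxc : SemiconjBy x c u := SemiconjBy.inv_symm_left_iff.mp hcx
  have hxb : SemiconjBy x b c := inv_mul_inv_of_pow_three_eq_one hx ▸ hcx.mul_left hux
  have hyb : SemiconjBy y b c := by
    have hy : y = x⁻¹ * y⁻¹ * x⁻¹ := by
      rw [← mul_swap_eq_inv_mul_inv_of_sq_eq_one hxy, mul_inv_cancel_right]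
    rw [hy]
    exact (hcx.mul_left hyu.inv_left).mul_left hux
  have hyc : SemiconjBy y c b := by
    have hy : y = x * diagonal x y * x := by
      rw [← diagonal_inv_inv hx hxy, diagonal]; group
    rw [hy]
    exact (hxu.mul_left ht.symm).mul_left hxc
  have hub : SemiconjBy u b c := semiconjBy_pow_of_odd hyb hyc hk
  have hbc : SemiconjBy b c u :=
    (hxc.mul_left hub).mul_left (SemiconjBy.inv_symm_left_iff.mpr hxb)
  exact ⟨⟨k, zpow_natCast y k⟩, hsq, hxu, hxb, hxc, hyc, hub, hbc⟩

namespace ConjTriple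

variable {x y u b c : G} (h : ConjTriple x y u b c)
include h

theorem y_u : Commute y u := by
  obtain ⟨n, rfl⟩ := h.mem
  exact (Commute.refl y).zpow_right n

theorem b_sq : b ^ 2 = 1 := by
  rw [← (h.x_u.pow_right 2).eq_one_iff, h.u_sq]

theorem c_sq : c ^ 2 = 1 := by
  rw [← (h.x_b.pow_right 2).eq_one_iff, h.b_sq]

theorem u_inv : u⁻¹ = u := inv_eq_of_mul_eq_one_left ((pow_two u).symm.trans h.u_sq)

theorem b_inv : b⁻¹ = b := inv_eq_of_mul_eq_one_left ((pow_two b).symm.trans h.b_sq)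

theorem u_c : SemiconjBy u c b := by
  rw [← SemiconjBy.inv_symm_left_iff, h.u_inv]
  exact h.u_b

theorem b_u : SemiconjBy b u c := by
  rw [← SemiconjBy.inv_symm_left_iff, h.b_inv]
  exact h.b_c

theorem yu_u : Commute (y * u) u := h.y_u.mul_left (Commute.refl u)

theorem yu_b : Commute (y * u) b := h.y_c.mul_left h.u_b

theorem bux_u : Commute (b * u * x) u := (h.b_c.mul_left h.u_b).mul_left h.x_u

theorem bux_b : Commute (b * u * x) b :=
  (SemiconjBy.mul_left (Commute.refl b) h.u_c).mul_left h.x_b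

theorem x_bu : Commute x (b * u) := by
  have hx := h.x_b.mul_right h.x_u
  rwa [← h.b_u.eq] at hx

theorem bub_eq : b * u * b = c := by
  rw [h.b_u.eq, mul_assoc, ← pow_two, h.b_sq, mul_one]

theorem ubu_eq : u * b * u = c := by
  rw [h.u_b.eq, mul_assoc, ← pow_two, h.u_sq, mul_one]

theorem bux_pow_three (hx : x ^ 3 = 1) : (b * u * x) ^ 3 = 1 := by
  have hbu : (b * u) ^ 3 = 1 := by
    calc (b * u) ^ 3 = (b * u * b) * (u * b * u) := by simp only [pow_succ, pow_zero]; group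
      _ = 1 := by rw [h.bub_eq, h.ubu_eq, ← pow_two, h.c_sq]
  rw [h.x_bu.symm.mul_pow, hx, hbu, mul_one]

theorem bux_mul_yu_sq (hxy : (x * y) ^ 2 = 1) : (b * u * x * (y * u)) ^ 2 = 1 := by
  have hc : Commute c (x * y) := (h.x_b.mul_left h.y_c).symm
  have hprod : b * u * x * (y * u) = c * (x * y) := by
    calc b * u * x * (y * u) = b * u * (x * u) * y := by rw [h.y_u.eq]; group
      _ = b * u * b * (x * y) := by rw [h.x_u.eq]; group
      _ = c * (x * y) := by rw [h.bub_eq]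
  rw [hprod, hc.mul_pow, h.c_sq, hxy, mul_one]

theorem diagonal_bux_yu : diagonal (b * u * x) (y * u) = u * diagonal x y := by
  have hYw : Commute (y * u)⁻¹ (b * u) := (h.yu_b.mul_right h.yu_u).inv_left
  have htc : SemiconjBy (diagonal x y) c b := (h.x_u.mul_left h.y_u.inv_left).mul_left h.x_c
  calc b * u * x * (y * u)⁻¹ * (b * u * x)
      = b * u * (x * ((y * u)⁻¹ * (b * u)) * x) := by simp only [mul_assoc]
    _ = b * u * ((x * (b * u)) * (y * u)⁻¹ * x) := by rw [hYw.eq]; simp only [mul_assoc]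
    _ = b * u * b * u * (x * (y * u)⁻¹ * x) := by rw [h.x_bu.eq]; simp only [mul_assoc]
    _ = c * u * (x * y⁻¹ * (u * x)) := by
      rw [h.bub_eq, h.y_u.eq, mul_inv_rev, h.u_inv]; simp only [mul_assoc]
    _ = c * u * (diagonal x y * c) := by rw [← h.x_c.eq, diagonal]; simp only [mul_assoc]
    _ = u * (b * b) * diagonal x y := by rw [htc.eq, ← h.u_b.eq]; simp only [mul_assoc]
    _ = u * diagonal x y := by rw [← pow_two, h.b_sq, mul_one]

theorem isReflexive_bux_yu (hr : IsReflexive x y) : IsReflexive (b * u * x) (y * u) := by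
  obtain ⟨σ, hσx, hσy⟩ := hr
  have hσu : σ u = u := by
    obtain ⟨n, hn : y ^ n = u⟩ := h.mem
    rw [← hn, map_zpow, hσy, inv_zpow, hn, h.u_inv]
  have hσb : σ b = c := by
    have hcx : SemiconjBy x⁻¹ u c := SemiconjBy.inv_symm_left_iff.mpr h.x_c
    have hσcx := h.x_u.map σ
    rw [hσx, hσu] at hσcx
    exact mul_right_cancel (hσcx.eq.symm.trans hcx.eq)
  refine ⟨σ, ?_, ?_⟩
  · calc σ (b * u * x) = c * u * x⁻¹ := by rw [map_mul, map_mul, hσb, hσu, hσx]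
      _ = (x * (b * u))⁻¹ := by
        rw [mul_inv_rev, mul_inv_rev, h.u_inv, h.b_inv, h.u_b.eq]
      _ = (b * u * x)⁻¹ := by rw [h.x_bu.eq]
  · rw [map_mul, hσy, hσu, h.y_u.eq, mul_inv_rev, h.u_inv]

theorem six_mul_natCard_le [Finite G] (hx : x ^ 3 = 1) (hxu : ¬ Commute x u) :
    6 * Nat.card (Subgroup.closure {b * u * x, y * u}) ≤ Nat.card G := by
  have hle : Subgroup.closure {b * u * x, y * u} ≤ Subgroup.centralizer {u, b} := by
    rw [Subgroup.closure_le]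
    rintro g (rfl | rfl) z (rfl | rfl)
    · exact h.bux_u.eq.symm
    · exact h.bux_b.eq.symm
    · exact h.yu_u.eq.symm
    · exact h.yu_b.eq.symm
  have hord2 : orderOf u = 2 := orderOf_eq_prime h.u_sq fun hu => hxu (hu ▸ Commute.one_right x)
  have hord3 : orderOf x = 3 := orderOf_eq_prime hx fun hx => hxu (hx ▸ Commute.one_left u)
  have h2 : 2 * Nat.card (Subgroup.centralizer {u, b}) ≤ Nat.card (Subgroup.centralizer {u}) := by
    rw [← hord2]
    refine prime_mul_natCard_le (Subgroup.centralizer_le (by simp)) (hord2 ▸ Nat.prime_two) ?_ ?_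
    · exact Subgroup.mem_centralizer_singleton_iff.mpr rfl
    · intro hu
      have hcb : c * b = c * u := by rw [← h.b_u.eq, ← h.u_b.eq, hu b (Or.inr rfl)]
      exact hxu (mul_left_cancel hcb ▸ h.x_u)
  have h3 : 3 * Nat.card (Subgroup.centralizer {u}) ≤ Nat.card (⊤ : Subgroup G) := by
    rw [← hord3]
    refine prime_mul_natCard_le le_top (hord3 ▸ Nat.prime_three) (Subgroup.mem_top x) ?_
    rw [Subgroup.mem_centralizer_singleton_iff]
    exact hxu
  have := Subgroup.card_le_of_le hle
  rw [Subgroup.card_top] at h3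
  linarith

theorem eight_mul_orderOf_yu_sq_le [Finite G] (hr : IsReflexive x y) (hx : x ^ 3 = 1)
    (hxy : (x * y) ^ 2 = 1) (hu : u ≠ 1) (hyu : y * u ≠ 1) (hfree : IsFreeAt y x)
    (hdiag : IsFreeAt (y * u) (diagonal x y)) : 8 * orderOf (y * u) ^ 2 ≤ Nat.card G := by
  set K := Subgroup.closure {b * u * x, y * u}
  let s : K := ⟨b * u * x, Subgroup.subset_closure (Or.inl rfl)⟩
  let Y : K := ⟨y * u, Subgroup.subset_closure (Or.inr rfl)⟩
  have hxu : ¬ Commute x u := fun hxu => by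
    obtain ⟨n, rfl⟩ := h.mem
    exact hu (hfree n n hxu.eq.symm)
  have hs : IsFreeAt (y * u) (b * u * x) :=
    (hfree.mono (mul_mem (Subgroup.mem_zpowers y) h.mem)).mul_left
      (h.yu_b.mul_right h.yu_u).symm
  have ht : IsFreeAt (y * u) (diagonal (b * u * x) (y * u)) := by
    rw [h.diagonal_bux_yu]
    exact hdiag.mul_left h.yu_u.symm
  have hK : 4 * orderOf Y ^ 2 ≤ 3 * Nat.card K :=
    (h.isReflexive_bux_yu hr).closure.four_mul_orderOf_sq_le (x := s)
      (Subtype.ext (h.bux_pow_three hx)) (Subtype.ext (h.bux_mul_yu_sq hxy))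
      (fun hY => hyu (congrArg Subtype.val hY)) (.of_injective K.subtype_injective hs)
      (.of_injective K.subtype_injective (map_diagonal K.subtype s Y ▸ ht))
  rw [← Subgroup.orderOf_coe] at hK
  linarith [h.six_mul_natCard_le hx hxu]

end ConjTriple

theorem IsReflexive.two_mul_orderOf_sq_le [Finite G] {x y : G} (hr : IsReflexive x y)
    (hx : x ^ 3 = 1) (hxy : (x * y) ^ 2 = 1) (hfree : IsFreeAt y x) {k : ℕ} (hk : Odd k)
    (hk1 : k ≠ 1) (hy : orderOf y = 2 * k)
    (hperiod : MulAction.period y ((diagonal x y : G) : Vertex y) = k) :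
    2 * orderOf y ^ 2 ≤ Nat.card G := by
  have hsq : (y ^ k) ^ 2 = 1 := by rw [← pow_mul, mul_comm, ← hy, pow_orderOf_eq_one]
  have hne : y ^ k ≠ 1 := by
    rw [Ne, ← orderOf_dvd_iff_pow_eq_one, hy]
    exact fun hdvd => absurd (Nat.le_of_dvd hk.pos hdvd) (by linarith [hk.pos])
  have ht : Commute (y ^ k) (diagonal x y) :=
    (commute_of_mem_normalizer_zpowers hsq
      (hperiod ▸ mem_normalizer_zpowers_pow_period (isOfFinOrder_of_finite y) (diagonal x y))).symm
  have horder : orderOf (y * y ^ k) = k := by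
    rw [← pow_succ', orderOf_pow_succ_of_odd hk hy]
  have hdiag : IsFreeAt (y * y ^ k) (diagonal x y) := by
    rw [← pow_succ']
    refine isFreeAt_pow ?_
    rw [hy, hperiod]
    exact two_mul_dvd_lcm_succ hk
  have hle := (conjTriple_pow hx hxy hk hsq ht).eight_mul_orderOf_yu_sq_le hr hx hxy hne
    (fun h => hk1 (by rw [← horder, h, orderOf_one])) hfree hdiag
  rw [horder] at hle
  rw [hy]
  linarith

end CentralProduct

section Fermat

variable {x y : G}

theorem semiconjBy_inv_of_sq_eq_one (hxy : (x * y) ^ 2 = 1) (hy : y ^ 2 = 1) :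
    SemiconjBy y x x⁻¹ := by
  have hy' : y⁻¹ = y := inv_eq_of_mul_eq_one_left ((pow_two y).symm.trans hy)
  rw [SemiconjBy, mul_swap_eq_inv_mul_inv_of_sq_eq_one hxy, hy']

theorem finite_of_semiconjBy_inv (hgen : Subgroup.closure {x, y} = ⊤) (hyx : SemiconjBy y x x⁻¹)
    (hx : IsOfFinOrder x) (hy : IsOfFinOrder y) : Finite G := by
  rw [← Set.finite_univ_iff, ← zpowers_mul_zpowers_eq_univ hgen hyx]
  exact hx.finite_zpowers.mul hy.finite_zpowers

theorem natCard_le_orderOf_mul_orderOf (hgen : Subgroup.closure {x, y} = ⊤)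
    (hyx : SemiconjBy y x x⁻¹) : Nat.card G ≤ orderOf x * orderOf y := by
  rw [← Nat.card_univ, ← zpowers_mul_zpowers_eq_univ hgen hyx, ← Nat.card_zpowers,
    ← Nat.card_zpowers]
  exact Set.natCard_mul_le

theorem finite_and_natCard_le_six (hgen : Subgroup.closure {x, y} = ⊤) (hxy : (x * y) ^ 2 = 1)
    (hx : x ^ 3 = 1) (hy : y ^ 2 = 1) : Finite G ∧ Nat.card G ≤ 6 := by
  have hyx := semiconjBy_inv_of_sq_eq_one hxy hy
  refine ⟨finite_of_semiconjBy_inv hgen hyx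
    (isOfFinOrder_iff_pow_eq_one.mpr ⟨3, three_pos, hx⟩)
    (isOfFinOrder_iff_pow_eq_one.mpr ⟨2, two_pos, hy⟩), ?_⟩
  calc Nat.card G ≤ orderOf x * orderOf y := natCard_le_orderOf_mul_orderOf hgen hyx
    _ ≤ 3 * 2 := Nat.mul_le_mul (orderOf_le_of_pow_eq_one three_pos hx)
      (orderOf_le_of_pow_eq_one two_pos hy)

theorem natCard_eq_six (hgen : Subgroup.closure {x, y} = ⊤) (hxy : (x * y) ^ 2 = 1)
    (hp : orderOf x = 3) (hq : orderOf y = 2) : Nat.card G = 6 := by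
  obtain ⟨_, hle⟩ := finite_and_natCard_le_six hgen hxy (hp ▸ pow_orderOf_eq_one x)
    (hq ▸ pow_orderOf_eq_one y)
  have hdvd : 3 * 2 ∣ Nat.card G :=
    Nat.Coprime.mul_dvd_of_dvd_of_dvd (by norm_num) (hp ▸ orderOf_dvd_natCard x)
      (hq ▸ orderOf_dvd_natCard y)
  exact le_antisymm hle (Nat.le_of_dvd Nat.card_pos hdvd)

theorem closure_of_zero_of_one (rels : Set (FreeGroup (Fin 2))) :
    Subgroup.closure {(PresentedGroup.of 0 : PresentedGroup rels), PresentedGroup.of 1} = ⊤ := by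
  rw [← PresentedGroup.closure_range_of rels]
  congr 1
  ext z
  simp only [Set.mem_insert_iff, Set.mem_singleton_iff, Set.mem_range, Fin.exists_fin_two, eq_comm]

theorem lift_eq_one_of_mem_fermatRels_one (hxy : (x * y) ^ 2 = 1) (hx : x ^ 3 = 1) (hy : y ^ 2 = 1)
    {r : FreeGroup (Fin 2)} (hr : r ∈ fermatRels 1) : FreeGroup.lift ![x, y] r = 1 := by
  rcases hr with rfl | rfl | rfl | rfl
  · simpa using hx
  · simpa using hy
  · simpa using hxy
  · have hyx := (semiconjBy_inv_of_sq_eq_one hxy hy).inv_right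
    have hcomm : x * y * x⁻¹ * y⁻¹ = x ^ 2 := by
      rw [mul_assoc x, hyx.eq, inv_inv, ← mul_assoc, mul_inv_cancel_right, pow_two]
    simp only [map_pow, map_mul, map_inv, FreeGroup.lift_apply_of, Matrix.cons_val_zero,
      Matrix.cons_val_one]
    rw [hcomm, ← pow_mul, mul_comm, pow_mul, hx, one_pow]

theorem isFermat_one (hgen : Subgroup.closure {x, y} = ⊤) (hxy : (x * y) ^ 2 = 1)
    (hp : orderOf x = 3) (hq : orderOf y = 2) : IsFermat 1 G x y := by
  have hrel : ∀ r ∈ fermatRels 1, FreeGroup.lift ![x, y] r = 1 := fun _ hr =>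
    lift_eq_one_of_mem_fermatRels_one hxy (hp ▸ pow_orderOf_eq_one x)
      (hq ▸ pow_orderOf_eq_one y) hr
  let φ : PresentedGroup (fermatRels 1) →* G := PresentedGroup.toGroup hrel
  have hφ0 : φ (PresentedGroup.of 0) = x := PresentedGroup.toGroup.of hrel
  have hφ1 : φ (PresentedGroup.of 1) = y := PresentedGroup.toGroup.of hrel
  have hsurj : Function.Surjective φ := by
    rw [← MonoidHom.range_eq_top, eq_top_iff, ← hgen, Subgroup.closure_le]
    rintro z (rfl | rfl)
    · exact ⟨_, hφ0⟩
    · exact ⟨_, hφ1⟩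
  obtain ⟨_, hle⟩ := finite_and_natCard_le_six (closure_of_zero_of_one (fermatRels 1))
    (PresentedGroup.one_of_mem (Or.inr (Or.inr (Or.inl rfl))))
    (PresentedGroup.one_of_mem (Or.inl rfl))
    (PresentedGroup.one_of_mem (Or.inr (Or.inl rfl)))
  have hbij : Function.Bijective φ := by
    refine hsurj.bijective_of_nat_card_le ?_
    rwa [natCard_eq_six hgen hxy hp hq]
  exact ⟨MulEquiv.ofBijective φ hbij, hφ0, hφ1⟩

end Fermat

/-- A non-tetrahedral map as above with `T = q` is the Fermat map `Fer(1)`;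
in particular `q = 2` and `|G| = 6`. -/
theorem evenPeriod_eq_q_implies_fermat_one
    (G : Type*) [Group G] [Finite G] (x y : G)
    (hgen : Subgroup.closure {x, y} = ⊤) (hxy : (x * y) ^ 2 = 1)
    (hrefl : IsReflexive x y) (hsimple : IsSimple x y)
    (hden : 2 * orderOf y ^ 2 > Nat.card G) (hp : orderOf x = 3)
    (hnt : ¬ IsTet G x y) (hT : evenPeriod x y = orderOf y) :
    IsFermat 1 G x y ∧ orderOf y = 2 ∧ Nat.card G = 6 := by
  have hx : x ^ 3 = 1 := hp ▸ pow_orderOf_eq_one x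
  have hfree : IsFreeAt y x := hsimple.isFreeAt hxy
  have hy3 : y ^ 3 ≠ 1 := fun hy3 => by
    have h2 : 2 ∣ orderOf y := hT ▸ Nat.dvd_lcm_right _ _
    have h3 : orderOf y ∣ 3 := orderOf_dvd_of_pow_eq_one hy3
    exact absurd (h2.trans h3) (by norm_num)
  have hlt : MulAction.period y ((diagonal x y : G) : Vertex y) < orderOf y := by
    have hle := hrefl.orderOf_add_period_diagonal_le hx hxy hfree hy3
    have hV := natCard_vertex_mul_orderOf y
    nlinarith
  obtain ⟨hodd, hq⟩ := odd_and_eq_two_mul_of_lcm_two hT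
    (primPeriod_le_period hx hxy (isOfFinOrder_of_finite y)) (MulAction.period_dvd_orderOf y _) hlt
  by_cases hd : MulAction.period y ((diagonal x y : G) : Vertex y) = 1
  · rw [hd, mul_one] at hq
    exact ⟨isFermat_one hgen hxy hp hq, hq, natCard_eq_six hgen hxy hp hq⟩
  · exact absurd (hrefl.two_mul_orderOf_sq_le hx hxy hfree hodd hd hq rfl) (not_le.mpr hden)

end RegularMap
end

section
/- Let (G,x,y) encode a reflexive regular map that is simple, is not the tetrahedral map tet, and satisfies 2q² > |G| and 3q² ≤ 2|G| (i.e. 1/2 < den ≤ 2/3). Then 3q² = 2|G|, i.e. the density equals 2/3. -/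
namespace RegularMap

variable {G : Type*} [Group G]

/-!
Put `A = ⟨y⟩`, `q = |A|` and `e = x * y`. Simplicity says that `A` meets its conjugate by `e`
trivially, so the double coset `AeA` has `q²` elements, more than half of `G`. Hence `A` meets its
conjugate by any `t ∉ AeA` in a nontrivial subgroup, whose normalizer contains `A` and `t` but
not `e`.

Call `a ∈ A` a triangle step if `e * a * e ∈ AeA`; a reflection fixing `e` and inverting `A` then
forces `e * a * e = a⁻¹ * e * a⁻¹`. The normalizers above show that all powers of a non-step are
non-steps. Now `y` is a step, since otherwise a proper subgroup would contain the `q²` products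
in `A · eAe`; `y ^ 2` is not, since otherwise `y ^ 3 = 1`; and `y ^ 3` is, since otherwise `6 ∣ q`
and a subgroup of index at least `3` would have at least `q² / 2 + q² / 6` elements.

The relations of the steps `y` and `y ^ 3` make `y ^ 2` commute with `e * y ^ 2 * e`. These two
elements of order `q / 2` generate a normal abelian subgroup whose quotient is a quotient of `S₃`,
so `|G| ≤ 6 (q / 2)²`.
-/
section DoubleCoset

open DoubleCoset Subgroup
open scoped Pointwise

theorem mul_mul_injective_of_disjoint_conj {H K : Subgroup G} {g : G}
    (hd : Disjoint H (MulAut.conj g • K)) :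
    Function.Injective (fun p : H × K => (p.1 * g * p.2 : G)) := by
  rintro ⟨a, b⟩ ⟨c, d⟩ (h : (a * g * b : G) = c * g * d)
  let conjMem (k : K) : (MulAut.conj g • K : Subgroup G) :=
    ⟨g * k * g⁻¹, smul_mem_pointwise_smul (k : G) (MulAut.conj g) K k.2⟩
  have hconj : (a, conjMem b) = (c, conjMem d) := mul_injective_of_disjoint hd <|
    show (a * (g * b * g⁻¹) : G) = c * (g * d * g⁻¹) by
      simpa only [mul_assoc] using congrArg (· * g⁻¹) h
  have hac : a = c := congrArg Prod.fst hconj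
  subst hac
  exact Prod.ext rfl (Subtype.ext (mul_left_cancel h))

theorem eq_and_eq_of_mul_mul_eq {H K : Subgroup G} {g a b c d : G}
    (hd : Disjoint H (MulAut.conj g • K)) (ha : a ∈ H) (hb : b ∈ K) (hc : c ∈ H) (hd' : d ∈ K)
    (h : a * g * b = c * g * d) : a = c ∧ b = d := by
  simpa using mul_mul_injective_of_disjoint_conj hd (a₁ := (⟨a, ha⟩, ⟨b, hb⟩))
    (a₂ := (⟨c, hc⟩, ⟨d, hd'⟩)) h

theorem ncard_doubleCoset_of_disjoint_conj {H K : Subgroup G} {g : G}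
    (hd : Disjoint H (MulAut.conj g • K)) :
    (doubleCoset g H K).ncard = Nat.card H * Nat.card K := by
  have hrange : doubleCoset g H K = Set.range (fun p : H × K => (p.1 * g * p.2 : G)) := by
    ext t
    simp [mem_doubleCoset, eq_comm]
  rw [hrange, Set.ncard_range_of_injective (mul_mul_injective_of_disjoint_conj hd), Nat.card_prod]

theorem notMem_doubleCoset {H K N : Subgroup G} (hH : H ≤ N) (hK : K ≤ N) {g t : G}
    (hg : g ∉ N) (ht : t ∈ N) : t ∉ doubleCoset g H K := by
  rw [mem_doubleCoset]
  rintro ⟨a, ha, b, hb, rfl⟩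
  rw [N.mul_mem_cancel_right (hK hb), N.mul_mem_cancel_left (hH ha)] at ht
  exact hg ht

theorem mem_doubleCoset_of_card_lt [Finite G] {H : Subgroup G} {g t : G}
    (hg : Disjoint H (MulAut.conj g • H)) (ht : Disjoint H (MulAut.conj t • H))
    (hcard : Nat.card G < 2 * Nat.card H ^ 2) : t ∈ doubleCoset g H H := by
  refine mem_doubleCoset_of_not_disjoint fun hdisj => hcard.not_ge ?_
  calc 2 * Nat.card H ^ 2 = (doubleCoset g H H ∪ doubleCoset t H H).ncard := by
        rw [Set.ncard_union_eq hdisj, ncard_doubleCoset_of_disjoint_conj hg,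
          ncard_doubleCoset_of_disjoint_conj ht]
        ring
    _ ≤ Nat.card G := Set.ncard_le_card _

theorem zpowers_eq_zpowers_of_orderOf_eq {C : Type*} [Group C] [Finite C] [IsCyclic C] {a b : C}
    (h : orderOf a = orderOf b) : zpowers a = zpowers b := by
  let _ : CommGroup C := IsCyclic.commGroup
  have eq_ker (c : C) : zpowers c = (powMonoidHom (orderOf c) : C →* C).ker := by
    refine eq_of_le_of_card_ge ?_ ?_
    · rw [zpowers_le, MonoidHom.mem_ker, powMonoidHom_apply, pow_orderOf_eq_one]
    · rw [IsCyclic.card_powMonoidHom_ker, Nat.card_zpowers,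
        Nat.gcd_eq_right (orderOf_dvd_natCard c)]
  rw [eq_ker a, eq_ker b, h]

theorem mem_normalizer_zpowers_of_conj_mem [Finite G] {H : Subgroup G} [IsCyclic H] {a t : G}
    (ha : a ∈ H) (hta : t * a * t⁻¹ ∈ H) : t ∈ normalizer (zpowers a : Set G) := by
  have horder : orderOf (⟨a, ha⟩ : H) = orderOf (⟨t * a * t⁻¹, hta⟩ : H) := by
    rw [orderOf_mk, orderOf_mk]
    exact ((MulAut.conj t).orderOf_eq a).symm
  have hpow := congrArg (map H.subtype) (zpowers_eq_zpowers_of_orderOf_eq horder)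
  rw [MonoidHom.map_zpowers, MonoidHom.map_zpowers] at hpow
  rw [mem_normalizer_iff_map_conj_eq, MonoidHom.map_zpowers]
  exact hpow.symm

-- If `t` lies outside the big double coset, then `H ∩ t⁻¹Ht` contains some `a ≠ 1`; since a cyclic
-- group has at most one subgroup of each order, `t` normalizes `⟨a⟩`, and `N` is its normalizer.
theorem exists_subgroup_of_notMem_doubleCoset [Finite G] {H : Subgroup G} [IsCyclic H] {g t : G}
    (hg : Disjoint H (MulAut.conj g • H)) (hcard : Nat.card G < 2 * Nat.card H ^ 2)
    (ht : t ∉ doubleCoset g H H) : ∃ N : Subgroup G, H ≤ N ∧ g ∉ N ∧ t ∈ N := by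
  have hmeet : ¬ Disjoint H (MulAut.conj t • H) := fun h =>
    ht (mem_doubleCoset_of_card_lt hg h hcard)
  obtain ⟨a, ha, hta, hne⟩ : ∃ a ∈ H, t * a * t⁻¹ ∈ H ∧ a ≠ 1 := by
    simp only [disjoint_def, mem_smul_pointwise_iff_exists] at hmeet
    push Not at hmeet
    obtain ⟨_, hb, ⟨a, ha, rfl⟩, hne⟩ := hmeet
    exact ⟨a, ha, hb, fun h => hne (by rw [h, smul_one])⟩
  refine ⟨normalizer (zpowers a : Set G), fun h hh => ?_, fun hgN => hne ?_,
    mem_normalizer_zpowers_of_conj_mem ha hta⟩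
  · exact mem_normalizer_zpowers_of_conj_mem ha (H.mul_mem (H.mul_mem hh ha) (H.inv_mem hh))
  · have hga : g * a * g⁻¹ ∈ H :=
      zpowers_le.2 ha ((mem_normalizer_iff.1 hgN a).1 (mem_zpowers a))
    have := disjoint_def.1 hg hga (smul_mem_pointwise_smul a (MulAut.conj g) H ha)
    rwa [conj_eq_one_iff] at this

theorem card_mul_card_le_of_disjoint {H K N : Subgroup G} [Finite N] (hd : Disjoint H K)
    (hH : H ≤ N) (hK : K ≤ N) : Nat.card H * Nat.card K ≤ Nat.card N := by
  rw [← Nat.card_prod]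
  exact Nat.card_le_card_of_injective
    (fun p : H × K => (⟨p.1 * p.2, N.mul_mem (hH p.1.2) (hK p.2.2)⟩ : N))
    fun _ _ h => mul_injective_of_disjoint hd (congrArg Subtype.val h)

end DoubleCoset

section CardBounds

open Subgroup

theorem card_closure_pair_le_of_commute [Finite G] {a b : G} (h : Commute a b) :
    Nat.card (closure {a, b}) ≤ orderOf a * orderOf b := by
  have hcomm (m : zpowers a) (n : zpowers b) :
      Commute ((zpowers a).subtype m) ((zpowers b).subtype n) := by
    obtain ⟨⟨_, i, rfl⟩, ⟨_, j, rfl⟩⟩ := m, n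
    exact h.zpow_zpow i j
  let f := (zpowers a).subtype.noncommCoprod (zpowers b).subtype hcomm
  have hle : closure {a, b} ≤ f.range := by
    rw [MonoidHom.noncommCoprod_range, range_subtype, range_subtype, closure_le]
    rintro _ (rfl | rfl)
    · exact mem_sup_left (mem_zpowers _)
    · exact mem_sup_right (mem_zpowers _)
  calc Nat.card (closure {a, b}) ≤ Nat.card f.range := card_le_of_le hle
    _ ≤ Nat.card (zpowers a × zpowers b) :=
      Nat.card_le_card_of_surjective f.rangeRestrict f.rangeRestrict_surjective
    _ = orderOf a * orderOf b := by rw [Nat.card_prod, Nat.card_zpowers, Nat.card_zpowers]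

theorem normal_closure_of_conj_mem [Finite G] {S T : Set G} (hT : closure T = ⊤)
    (h : ∀ t ∈ T, ∀ s ∈ S, t * s * t⁻¹ ∈ closure S) : (closure S).Normal := by
  rw [← normalizer_eq_top_iff, ← top_le_iff, ← hT, closure_le]
  intro t ht
  have hmap : (closure S).map (MulAut.conj t).toMonoidHom ≤ closure S := by
    rw [MonoidHom.map_closure, closure_le]
    rintro _ ⟨s, hs, rfl⟩
    exact h t ht s hs
  exact mem_normalizer_fintype fun n hn => hmap (mem_map_of_mem _ hn)

theorem card_le_two_mul_orderOf_mul [Finite G] {a b : G} (hgen : closure {a, b} = ⊤)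
    (ha : a * a = 1) (hb : b * b = 1) : Nat.card G ≤ 2 * orderOf (a * b) := by
  have hconj : ∀ t ∈ ({a, b} : Set G), t * (a * b) * t⁻¹ = (a * b)⁻¹ := by
    have hai : a⁻¹ = a := inv_eq_of_mul_eq_one_left ha
    have hbi : b⁻¹ = b := inv_eq_of_mul_eq_one_left hb
    rintro t (rfl | rfl)
    · rw [mul_inv_rev, hai, hbi, ← mul_assoc, ha, one_mul]
    · rw [mul_inv_rev, hai, mul_assoc, mul_inv_cancel_right, hbi]
  have hnormal : (zpowers (a * b)).Normal := by
    rw [zpowers_eq_closure]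
    refine normal_closure_of_conj_mem hgen ?_
    rintro t ht _ rfl
    exact hconj t ht ▸ inv_mem (subset_closure rfl)
  have hsup : zpowers a ⊔ zpowers (a * b) = ⊤ := by
    rw [← top_le_iff, ← hgen, closure_le]
    have hmem : a ∈ zpowers a ⊔ zpowers (a * b) := mem_sup_left (mem_zpowers a)
    rintro _ (rfl | rfl)
    · exact hmem
    · exact (mul_mem_cancel_left hmem).1 (mem_sup_right (mem_zpowers _))
  have hindex : (zpowers (a * b)).index ≤ 2 :=
    calc (zpowers (a * b)).index = (zpowers (a * b)).relIndex (zpowers a) := by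
          rw [← relIndex_top_right, ← hsup, relIndex_sup_right]
      _ ≤ Nat.card (zpowers a) := Nat.le_of_dvd Nat.card_pos (relIndex_dvd_card _ _)
      _ ≤ 2 := by
          rw [Nat.card_zpowers]
          exact orderOf_le_of_pow_eq_one two_pos ((sq a).trans ha)
  rw [← (zpowers (a * b)).card_mul_index, Nat.card_zpowers, mul_comm]
  gcongr

end CardBounds

section TriangleStep

open DoubleCoset Subgroup
open scoped Pointwise

/-- An element `a ∈ ⟨y⟩` is a triangle step: for a half-turn `e` about an edge with end vertices
`v = ⟨y⟩` and `w = e⟨y⟩`, the image `e * a * e⟨y⟩` of `v` under the rotation `e * a * e` about `w`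
is adjacent to `v`. Neighbours of `v` are the cosets contained in `⟨y⟩e⟨y⟩`. -/
def IsTriangleStep (e y a : G) : Prop :=
  e * a * e ∈ doubleCoset e (zpowers y : Set G) (zpowers y)

variable {e y a b : G}

theorem conj_mem_of_mem_zpowers {N : Subgroup G} (he : e * e = 1) (ha : e * a * e ∈ N)
    (hb : b ∈ zpowers a) : e * b * e ∈ N := by
  obtain ⟨k, rfl⟩ := mem_zpowers_iff.1 hb
  have hconj : (e * a * e) ^ k = e * a ^ k * e := by
    simpa only [inv_eq_of_mul_eq_one_left he] using conj_zpow (i := k) (a := e) (b := a)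
  exact hconj ▸ N.zpow_mem ha k

theorem IsTriangleStep.of_mem_zpowers [Finite G] (he : e * e = 1)
    (hd : Disjoint (zpowers y) (MulAut.conj e • zpowers y))
    (hcard : Nat.card G < 2 * orderOf y ^ 2) (hb : b ∈ zpowers a) (h : IsTriangleStep e y b) :
    IsTriangleStep e y a := by
  by_contra hstep
  rw [← Nat.card_zpowers] at hcard
  obtain ⟨N, hyN, heN, haN⟩ := exists_subgroup_of_notMem_doubleCoset hd hcard hstep
  exact notMem_doubleCoset hyN hyN heN (conj_mem_of_mem_zpowers he haN hb) h

theorem dvd_orderOf_of_not_isTriangleStep_pow [Finite G] (he : e * e = 1)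
    (hd : Disjoint (zpowers y) (MulAut.conj e • zpowers y))
    (hcard : Nat.card G < 2 * orderOf y ^ 2) (hy : IsTriangleStep e y y) {p : ℕ} (hp : p.Prime)
    (hstep : ¬ IsTriangleStep e y (y ^ p)) : p ∣ orderOf y := by
  by_contra hdvd
  obtain ⟨m, hm⟩ := exists_pow_eq_self_of_coprime ((hp.coprime_iff_not_dvd).2 hdvd)
  exact hstep (hy.of_mem_zpowers he hd hcard ⟨m, by simpa using hm⟩)

theorem isTriangleStep_self [Finite G] (he : e * e = 1)
    (hd : Disjoint (zpowers y) (MulAut.conj e • zpowers y))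
    (hcard : Nat.card G < 2 * orderOf y ^ 2) : IsTriangleStep e y y := by
  by_contra hstep
  rw [← Nat.card_zpowers] at hcard
  obtain ⟨N, hyN, heN, hyeN⟩ := exists_subgroup_of_notMem_doubleCoset hd hcard hstep
  have hconjN : MulAut.conj e • zpowers y ≤ N := by
    rw [pointwise_smul_subset_iff, zpowers_le, mem_inv_pointwise_smul_iff]
    simpa [inv_eq_of_mul_eq_one_left he] using hyeN
  have hsq : Nat.card (zpowers y) ^ 2 ≤ Nat.card N := by
    rw [sq]
    nth_rw 2 [Nat.card_congr (equivSMul (MulAut.conj e) (zpowers y)).toEquiv]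
    exact card_mul_card_le_of_disjoint hd hyN hconjN
  have hindex : 1 < N.index := one_lt_index_of_ne_top fun h => heN (h ▸ mem_top e)
  nlinarith [N.card_mul_index]

theorem map_eq_inv_of_mem_zpowers {τ : G →* G} (hτ : τ y = y⁻¹) (ha : a ∈ zpowers y) :
    τ a = a⁻¹ := by
  obtain ⟨k, rfl⟩ := mem_zpowers_iff.1 ha
  rw [map_zpow, hτ, inv_zpow]

-- Applying `τ` and inverting fixes `e * c * e` but turns `a * e * b` into `b * e * a`.
theorem eq_of_conj_eq_mul_mul {c : G} (he : e * e = 1)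
    (hd : Disjoint (zpowers y) (MulAut.conj e • zpowers y)) {τ : G →* G} (hτe : τ e = e)
    (hτy : τ y = y⁻¹) (ha : a ∈ zpowers y) (hb : b ∈ zpowers y) (hc : c ∈ zpowers y)
    (h : e * c * e = a * e * b) : a = b := by
  have hei : e⁻¹ = e := inv_eq_of_mul_eq_one_left he
  have hτ : e * c⁻¹ * e = a⁻¹ * e * b⁻¹ := by
    simpa only [map_mul, hτe, map_eq_inv_of_mem_zpowers hτy, ha, hb, hc] using congrArg τ h
  have hswap : a * e * b = b * e * a :=
    calc a * e * b = (e * c⁻¹ * e)⁻¹ := by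
          rw [← h]; simp only [mul_inv_rev, inv_inv, hei, mul_assoc]
      _ = b * e * a := by rw [hτ]; simp only [mul_inv_rev, inv_inv, hei, mul_assoc]
  exact (eq_and_eq_of_mul_mul_eq hd ha hb hb ha hswap).1

theorem IsTriangleStep.conj_eq (he : e * e = 1)
    (hd : Disjoint (zpowers y) (MulAut.conj e • zpowers y)) {τ : G →* G} (hτe : τ e = e)
    (hτy : τ y = y⁻¹) (ha : a ∈ zpowers y) (h : IsTriangleStep e y a) :
    e * a * e = a⁻¹ * e * a⁻¹ := by
  obtain ⟨b, hb, c, hc, hbc⟩ := mem_doubleCoset.1 h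
  obtain rfl : b = c := eq_of_conj_eq_mul_mul he hd hτe hτy hb hc ha hbc
  have hswap : e * b * e = b⁻¹ * e * a :=
    calc e * b * e = b⁻¹ * (b * e * b) * e := by group
      _ = b⁻¹ * e * a * (e * e) := by rw [← hbc]; group
      _ = b⁻¹ * e * a := by rw [he, mul_one]
  obtain rfl : b⁻¹ = a :=
    eq_of_conj_eq_mul_mul he hd hτe hτy (inv_mem hb) ha hb hswap
  rw [hbc, inv_inv]

theorem pow_three_eq_one_of_conj_eq (he : e * e = 1)
    (hd : Disjoint (zpowers y) (MulAut.conj e • zpowers y))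
    (h₁ : e * y * e = y⁻¹ * e * y⁻¹) (h₂ : e * y ^ 2 * e = (y ^ 2)⁻¹ * e * (y ^ 2)⁻¹) :
    y ^ 3 = 1 := by
  have hei : e⁻¹ = e := inv_eq_of_mul_eq_one_left he
  have h₂' : e * (y ^ 2)⁻¹ * e = y ^ 2 * e * y ^ 2 := by
    simpa only [mul_inv_rev, inv_inv, hei, mul_assoc] using congrArg (·⁻¹) h₂
  have hsq : (y ^ 2)⁻¹ * e * (y ^ 2)⁻¹ = y * e * y :=
    calc (y ^ 2)⁻¹ * e * (y ^ 2)⁻¹ = e * y * (e * e) * y * e := by rw [← h₂, he, sq]; group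
      _ = (e * y * e) * (e * y * e) := by group
      _ = y⁻¹ * (e * (y ^ 2)⁻¹ * e) * y⁻¹ := by rw [h₁]; group
      _ = y * e * y := by rw [h₂']; group
  have hy : y ∈ zpowers y := mem_zpowers y
  have hinv : (y ^ 2)⁻¹ = y :=
    (eq_and_eq_of_mul_mul_eq hd (inv_mem (pow_mem hy 2)) (inv_mem (pow_mem hy 2)) hy hy hsq).1
  calc y ^ 3 = y ^ 2 * y := pow_succ y 2
    _ = 1 := by nth_rw 2 [← hinv]; exact mul_inv_cancel _

theorem not_isTriangleStep_sq [Finite G] (he : e * e = 1)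
    (hd : Disjoint (zpowers y) (MulAut.conj e • zpowers y)) {τ : G →* G} (hτe : τ e = e)
    (hτy : τ y = y⁻¹) (hcard : Nat.card G < 2 * orderOf y ^ 2)
    (hcard' : 3 * orderOf y ^ 2 ≤ 2 * Nat.card G) : ¬ IsTriangleStep e y (y ^ 2) := by
  intro hstep
  have hy : y ∈ zpowers y := mem_zpowers y
  have hy3 : y ^ 3 = 1 := pow_three_eq_one_of_conj_eq he hd
    ((isTriangleStep_self he hd hcard).conj_eq he hd hτe hτy hy)
    (hstep.conj_eq he hd hτe hτy (pow_mem hy 2))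
  rcases (Nat.dvd_prime Nat.prime_three).1 (orderOf_dvd_of_pow_eq_one hy3) with hq | hq
  · rw [hq] at hcard hcard'
    omega
  · have he1 : e ≠ 1 := by
      rintro rfl
      rw [map_one, one_smul, disjoint_self, zpowers_eq_bot, ← orderOf_eq_one_iff] at hd
      omega
    have h2 : 2 ∣ Nat.card G :=
      orderOf_eq_prime ((sq e).trans he) he1 ▸ orderOf_dvd_natCard e
    have h3 : 3 ∣ Nat.card G := hq ▸ orderOf_dvd_natCard y
    rw [hq] at hcard hcard'
    omega

theorem three_le_index_of_isTriangleStep {N : Subgroup G} [N.FiniteIndex] (hy : y ∈ N)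
    (he : e ∉ N) (hstep : IsTriangleStep e y y) : 3 ≤ N.index := by
  have hyN : zpowers y ≤ N := zpowers_le.2 hy
  have h0 : N.index ≠ 0 := N.index_ne_zero_of_finite
  have h1 : N.index ≠ 1 := fun h => he (index_eq_one.1 h ▸ mem_top e)
  have h2 : N.index ≠ 2 := fun h =>
    notMem_doubleCoset hyN hyN he (by simp [mul_mem_iff_of_index_two h, hy, he]) hstep
  omega

theorem ncard_smul_doubleCoset_zpowers_pow
    (hd : Disjoint (zpowers y) (MulAut.conj e • zpowers y)) (g : G) {n : ℕ} (hn : n ≠ 0)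
    (hdvd : n ∣ orderOf y) :
    (g • doubleCoset e (zpowers (y ^ n)) (zpowers y)).ncard = orderOf y / n * orderOf y := by
  have hle : zpowers (y ^ n) ≤ zpowers y := zpowers_le.2 (pow_mem (mem_zpowers y) n)
  rw [Set.ncard_smul_set, ncard_doubleCoset_of_disjoint_conj (hd.mono_left hle),
    Nat.card_zpowers, Nat.card_zpowers, orderOf_pow_of_dvd hn hdvd]

-- Since `y * e * y ^ 4 = e * y⁻¹ * e * y ^ 3`, an element common to the two translates exhibits
-- `y ^ 3 * c`, for some `c ∈ ⟨y ^ 6⟩`, as a triangle step.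
theorem disjoint_smul_doubleCoset_of_not_isTriangleStep [Finite G] (he : e * e = 1)
    (hd : Disjoint (zpowers y) (MulAut.conj e • zpowers y)) (hcard : Nat.card G < 2 * orderOf y ^ 2)
    (hconj : e * y * e = y⁻¹ * e * y⁻¹) (hstep : ¬ IsTriangleStep e y (y ^ 3)) :
    Disjoint (e • doubleCoset e (zpowers (y ^ 2)) (zpowers y))
      ((y * e * y ^ 4) • doubleCoset e (zpowers (y ^ 6)) (zpowers y)) := by
  rw [Set.disjoint_left]
  rintro _ ⟨_, hP, rfl⟩ ⟨_, hQ, h⟩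
  obtain ⟨a, ha, b, hb, rfl⟩ := mem_doubleCoset.1 hP
  obtain ⟨c, hc, d, hd', rfl⟩ := mem_doubleCoset.1 hQ
  have h63 : y ^ 6 ∈ zpowers (y ^ 3) := mem_zpowers_iff.2 ⟨2, by group⟩
  have hc3 : y ^ 3 * c ∈ zpowers (y ^ 3) := mul_mem (mem_zpowers _) (zpowers_le.2 h63 hc)
  have ha1 : a ∈ zpowers y := zpowers_le.2 (pow_mem (mem_zpowers y) 2) ha
  refine hstep (IsTriangleStep.of_mem_zpowers he hd hcard hc3 (mem_doubleCoset.2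
    ⟨y * a, mul_mem (mem_zpowers y) ha1, b * d⁻¹, mul_mem hb (inv_mem hd'), ?_⟩))
  have hconj' : y * e * y = e * y⁻¹ * e := by
    simpa only [mul_inv_rev, inv_inv, inv_eq_of_mul_eq_one_left he, mul_assoc]
      using congrArg (·⁻¹) hconj.symm
  have hPQ : e * (y⁻¹ * e * (y ^ 3 * c) * e * d) = e * (a * e * b) :=
    calc e * (y⁻¹ * e * (y ^ 3 * c) * e * d) = (e * y⁻¹ * e) * y ^ 3 * c * e * d := by group
      _ = (y * e * y ^ 4) * (c * e * d) := by rw [← hconj']; group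
      _ = e * (a * e * b) := h
  calc e * (y ^ 3 * c) * e = y * (y⁻¹ * e * (y ^ 3 * c) * e * d) * d⁻¹ := by group
    _ = y * a * e * (b * d⁻¹) := by rw [mul_left_cancel hPQ]; group

theorem two_mul_sq_orderOf_le_three_mul_card [Finite G] {N : Subgroup G} (he : e * e = 1)
    (hd : Disjoint (zpowers y) (MulAut.conj e • zpowers y)) (hcard : Nat.card G < 2 * orderOf y ^ 2)
    (hconj : e * y * e = y⁻¹ * e * y⁻¹) (hstep : ¬ IsTriangleStep e y (y ^ 3))
    (hy : y ∈ N) (hN : e * y ^ 2 * e ∈ N) (hdvd : 6 ∣ orderOf y) :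
    2 * orderOf y ^ 2 ≤ 3 * Nat.card N := by
  let P := e • doubleCoset e (zpowers (y ^ 2)) (zpowers y)
  let Q := (y * e * y ^ 4) • doubleCoset e (zpowers (y ^ 6)) (zpowers y)
  have hPN : P ⊆ N := by
    rintro _ ⟨_, h, rfl⟩
    obtain ⟨a, ha, b, hb, rfl⟩ := mem_doubleCoset.1 h
    have := N.mul_mem (conj_mem_of_mem_zpowers he hN ha) (zpowers_le.2 hy hb)
    simpa only [SetLike.mem_coe, smul_eq_mul, mul_assoc] using this
  have hQN : Q ⊆ N := by
    rintro _ ⟨_, h, rfl⟩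
    obtain ⟨a, ha, b, hb, rfl⟩ := mem_doubleCoset.1 h
    have h42 : y ^ 4 ∈ zpowers (y ^ 2) := mem_zpowers_iff.2 ⟨2, by group⟩
    have h62 : y ^ 6 ∈ zpowers (y ^ 2) := mem_zpowers_iff.2 ⟨3, by group⟩
    have h42a : y ^ 4 * a ∈ zpowers (y ^ 2) := mul_mem h42 (zpowers_le.2 h62 ha)
    have := N.mul_mem hy (N.mul_mem (conj_mem_of_mem_zpowers he hN h42a) (zpowers_le.2 hy hb))
    simpa only [SetLike.mem_coe, smul_eq_mul, mul_assoc] using this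
  have h2 : 2 ∣ orderOf y := (by norm_num : 2 ∣ 6).trans hdvd
  have hsum : orderOf y / 2 * orderOf y + orderOf y / 6 * orderOf y ≤ Nat.card N :=
    calc _ = (P ∪ Q).ncard := by
          rw [Set.ncard_union_eq
            (disjoint_smul_doubleCoset_of_not_isTriangleStep he hd hcard hconj hstep),
            ncard_smul_doubleCoset_zpowers_pow hd e two_ne_zero h2,
            ncard_smul_doubleCoset_zpowers_pow hd _ (by norm_num) hdvd]
      _ ≤ (N : Set G).ncard := Set.ncard_le_ncard (Set.union_subset hPN hQN)
      _ = Nat.card N := rfl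
  obtain ⟨m, hm⟩ := hdvd
  rw [hm] at hsum ⊢
  have hm2 : 6 * m / 2 = 3 * m := by omega
  have hm6 : 6 * m / 6 = m := by omega
  rw [hm2, hm6] at hsum
  linarith

theorem isTriangleStep_pow_three [Finite G] (he : e * e = 1)
    (hd : Disjoint (zpowers y) (MulAut.conj e • zpowers y))
    (hcard : Nat.card G < 2 * orderOf y ^ 2) (hconj : e * y * e = y⁻¹ * e * y⁻¹)
    (h₂ : ¬ IsTriangleStep e y (y ^ 2)) : IsTriangleStep e y (y ^ 3) := by
  by_contra h₃
  have h₁ : IsTriangleStep e y y := isTriangleStep_self he hd hcard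
  have hdvd : 6 ∣ orderOf y := Nat.Coprime.mul_dvd_of_dvd_of_dvd (by decide : Nat.Coprime 2 3)
    (dvd_orderOf_of_not_isTriangleStep_pow he hd hcard h₁ Nat.prime_two h₂)
    (dvd_orderOf_of_not_isTriangleStep_pow he hd hcard h₁ Nat.prime_three h₃)
  obtain ⟨N, hyN, heN, hN⟩ :=
    exists_subgroup_of_notMem_doubleCoset hd (by rwa [Nat.card_zpowers]) h₂
  have hy : y ∈ N := zpowers_le.1 hyN
  have hindex := three_le_index_of_isTriangleStep hy heN h₁
  have hle := two_mul_sq_orderOf_le_three_mul_card he hd hcard hconj h₃ hy hN hdvd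
  nlinarith [N.card_mul_index]

end TriangleStep

section NormalSubgroup

open Subgroup

variable {e y : G}

theorem conj_sq_eq (he : e * e = 1) (h₁ : e * y * e = y⁻¹ * e * y⁻¹) :
    e * y ^ 2 * e = y⁻¹ * (e * y ^ 2 * e)⁻¹ * y⁻¹ :=
  have hei : e⁻¹ = e := inv_eq_of_mul_eq_one_left he
  calc e * y ^ 2 * e = e * y * (e * e) * y * e := by rw [he, sq]; group
    _ = (e * y * e) * (e * y * e) := by group
    _ = y⁻¹ * (e⁻¹ * (y ^ 2)⁻¹ * e⁻¹) * y⁻¹ := by rw [h₁, hei]; group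
    _ = y⁻¹ * (e * y ^ 2 * e)⁻¹ * y⁻¹ := by group

theorem commute_sq_conj_sq (he : e * e = 1) (h₁ : e * y * e = y⁻¹ * e * y⁻¹)
    (h₃ : e * y ^ 3 * e = (y ^ 3)⁻¹ * e * (y ^ 3)⁻¹) : Commute (y ^ 2) (e * y ^ 2 * e) := by
  have hei : e⁻¹ = e := inv_eq_of_mul_eq_one_left he
  have hinv : e * y⁻¹ * e = y * e * y := by
    simpa only [mul_inv_rev, inv_inv, hei, mul_assoc] using congrArg (·⁻¹) h₁
  have hcube : e * y ^ 2 * e = (y ^ 3)⁻¹ * (e * y ^ 2 * e)⁻¹ * y :=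
    calc e * y ^ 2 * e = e * y ^ 3 * (e * e) * y⁻¹ * e := by rw [he]; group
      _ = (e * y ^ 3 * e) * (e * y⁻¹ * e) := by group
      _ = (y ^ 3)⁻¹ * (e⁻¹ * (y ^ 2)⁻¹ * e⁻¹) * y := by rw [h₃, hinv, hei]; group
      _ = (y ^ 3)⁻¹ * (e * y ^ 2 * e)⁻¹ * y := by group
  have hcomm : Commute (y ^ 2)⁻¹ (e * y ^ 2 * e)⁻¹ :=
    calc (y ^ 2)⁻¹ * (e * y ^ 2 * e)⁻¹ = y * ((y ^ 3)⁻¹ * (e * y ^ 2 * e)⁻¹ * y) * y⁻¹ := by group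
      _ = y * (y⁻¹ * (e * y ^ 2 * e)⁻¹ * y⁻¹) * y⁻¹ := by rw [← hcube, ← conj_sq_eq he h₁]
      _ = (e * y ^ 2 * e)⁻¹ * (y ^ 2)⁻¹ := by group
  exact Commute.inv_inv_iff.1 hcomm

theorem normal_closure_sq_conj_sq [Finite G] (hgen : closure {e, y} = ⊤)
    (he : e * e = 1) (h₁ : e * y * e = y⁻¹ * e * y⁻¹) :
    (closure {y ^ 2, e * y ^ 2 * e}).Normal := by
  have hei : e⁻¹ = e := inv_eq_of_mul_eq_one_left he
  have hy2 : y ^ 2 ∈ closure {y ^ 2, e * y ^ 2 * e} := subset_closure (Or.inl rfl)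
  have hey2 : e * y ^ 2 * e ∈ closure {y ^ 2, e * y ^ 2 * e} := subset_closure (Or.inr rfl)
  have hee : e * (e * y ^ 2 * e) * e⁻¹ = y ^ 2 := by
    rw [hei, ← mul_assoc, ← mul_assoc, he, one_mul, mul_assoc, he, mul_one]
  have hyy : y * y ^ 2 * y⁻¹ = y ^ 2 := by group
  have hye : y * (e * y ^ 2 * e) * y⁻¹ = (e * y ^ 2 * e)⁻¹ * (y ^ 2)⁻¹ :=
    calc y * (e * y ^ 2 * e) * y⁻¹ = y * (y⁻¹ * (e * y ^ 2 * e)⁻¹ * y⁻¹) * y⁻¹ := by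
          rw [← conj_sq_eq he h₁]
      _ = (e * y ^ 2 * e)⁻¹ * (y ^ 2)⁻¹ := by group
  refine normal_closure_of_conj_mem hgen ?_
  rintro _ (rfl | rfl) _ (rfl | rfl)
  · rwa [hei]
  · rwa [hee]
  · rwa [hyy]
  · exact hye ▸ mul_mem (inv_mem hey2) (inv_mem hy2)

theorem mul_pow_three_eq_one_of_braid {a b : G} (ha : a * a = 1) (hb : b * b = 1)
    (h : a * b * a = b * a * b) : (a * b) ^ 3 = 1 :=
  calc (a * b) ^ 3 = a * b * a * b * a * b := by simp only [pow_succ, pow_zero, one_mul, mul_assoc]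
    _ = b * a * (b * b) * a * b := by rw [h]; group
    _ = b * (a * a) * b := by rw [hb]; group
    _ = 1 := by rw [ha, mul_one, hb]

theorem index_le_six_of_sq_mem {N : Subgroup G} [Finite G] [N.Normal] (hgen : closure {e, y} = ⊤)
    (he : e * e = 1) (h₁ : e * y * e = y⁻¹ * e * y⁻¹) (hN : y ^ 2 ∈ N) : N.index ≤ 6 := by
  have hgen' : closure {(e : G ⧸ N), (y : G ⧸ N)} = ⊤ := by
    rw [← map_top_of_surjective _ (QuotientGroup.mk'_surjective N), ← hgen, MonoidHom.map_closure,
      Set.image_pair, QuotientGroup.mk'_apply, QuotientGroup.mk'_apply]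
  have he' : (e : G ⧸ N) * e = 1 := congrArg (QuotientGroup.mk' N) he
  have hy' : (y : G ⧸ N) * y = 1 := by
    rw [← QuotientGroup.mk_mul, QuotientGroup.eq_one_iff, ← sq]
    exact hN
  have hbraid : (e : G ⧸ N) * y * e = y * e * y := by
    simpa [inv_eq_of_mul_eq_one_left hy'] using congrArg (QuotientGroup.mk' N) h₁
  calc N.index ≤ 2 * orderOf ((e : G ⧸ N) * y) := card_le_two_mul_orderOf_mul hgen' he' hy'
    _ ≤ 2 * 3 := by
      gcongr
      exact orderOf_le_of_pow_eq_one three_pos (mul_pow_three_eq_one_of_braid he' hy' hbraid)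

theorem card_le_six_mul_sq_orderOf [Finite G] (hgen : closure {e, y} = ⊤)
    (he : e * e = 1) (h₁ : e * y * e = y⁻¹ * e * y⁻¹) (hcomm : Commute (y ^ 2) (e * y ^ 2 * e)) :
    Nat.card G ≤ 6 * orderOf (y ^ 2) ^ 2 := by
  set N := closure {y ^ 2, e * y ^ 2 * e}
  have : N.Normal := normal_closure_sq_conj_sq hgen he h₁
  have horder : orderOf (e * y ^ 2 * e) = orderOf (y ^ 2) := by
    simpa [inv_eq_of_mul_eq_one_left he] using (MulAut.conj e).orderOf_eq (y ^ 2)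
  calc Nat.card G = Nat.card N * N.index := N.card_mul_index.symm
    _ ≤ (orderOf (y ^ 2) * orderOf (e * y ^ 2 * e)) * 6 :=
      Nat.mul_le_mul (card_closure_pair_le_of_commute hcomm)
        (index_le_six_of_sq_mem hgen he h₁ (subset_closure (Or.inl rfl)))
    _ = 6 * orderOf (y ^ 2) ^ 2 := by rw [horder]; ring

end NormalSubgroup

section Simple

open Subgroup
open scoped Pointwise

variable {x y : G}

theorem IsReflexive.exists_map_mul_eq_self (h : IsReflexive x y) (hxy : (x * y) ^ 2 = 1) :
    ∃ τ : G →* G, τ (x * y) = x * y ∧ τ y = y⁻¹ := by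
  obtain ⟨σ, hx, hy⟩ := h
  have hinv : (x * y)⁻¹ = x * y := inv_eq_of_mul_eq_one_left ((sq (x * y)).symm.trans hxy)
  refine ⟨(σ.trans (MulAut.conj y⁻¹)).toMonoidHom, ?_, ?_⟩
  · calc y⁻¹ * σ (x * y) * y⁻¹⁻¹ = (x * y)⁻¹ := by rw [map_mul, hx, hy]; group
      _ = x * y := hinv
  · simp [hy]

theorem eq_one_or_eq_of_mem_zpowers {e a : G} (he : e ^ 2 = 1) (ha : a ∈ zpowers e) :
    a = 1 ∨ a = e := by
  obtain ⟨k, rfl⟩ := mem_zpowers_iff.1 ha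
  obtain ⟨m, rfl | rfl⟩ := Int.even_or_odd' k
  · left
    rw [zpow_mul, zpow_ofNat, he, one_zpow]
  · right
    rw [zpow_add_one, zpow_mul, zpow_ofNat, he, one_zpow, one_mul]

theorem IsSimple.mul_notMem_zpowers (h : IsSimple x y) : x * y ∉ zpowers y := fun hmem =>
  h.1 1 (QuotientGroup.eq.2 (by simpa using hmem))

theorem IsSimple.disjoint_zpowers (h : IsSimple x y) (hxy : (x * y) ^ 2 = 1) :
    Disjoint (zpowers y) (MulAut.conj (x * y) • zpowers y) := by
  rw [disjoint_def]
  rintro _ ha ⟨b, hb, rfl⟩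
  set a := x * y * b * (x * y)⁻¹ with ha_def
  have hab : a * x * y = x * y * b := by rw [ha_def]; group
  have hstart : (QuotientGroup.mk 1 : Vertex y) = QuotientGroup.mk a :=
    QuotientGroup.eq.2 (by rwa [inv_one, one_mul])
  have hend : (QuotientGroup.mk (1 * x * y) : Vertex y) = QuotientGroup.mk (a * x * y) := by
    rw [hab, one_mul, QuotientGroup.mk_mul_of_mem _ hb]
  have hedge := h.2 1 a (by rw [hstart, hend])
  rw [QuotientGroup.eq, inv_one, one_mul] at hedge
  exact (eq_one_or_eq_of_mem_zpowers hxy hedge).resolve_right fun hxa =>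
    h.mul_notMem_zpowers (hxa ▸ ha)

theorem closure_mul_pair_eq_top (hgen : closure {x, y} = ⊤) : closure {x * y, y} = ⊤ := by
  have hy : y ∈ closure {x * y, y} := subset_closure (Or.inr rfl)
  rw [← top_le_iff, ← hgen, closure_le]
  rintro _ (rfl | rfl)
  · exact (mul_mem_cancel_right hy).1 (subset_closure (Or.inl rfl))
  · exact hy

end Simple

/-- A simple reflexive regular map, not the tetrahedron, whose density satisfies
`1/2 < den ≤ 2/3` has density exactly 2/3. -/
theorem density_eq_two_thirds
    (G : Type*) [Group G] [Finite G] (x y : G)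
    (hgen : Subgroup.closure {x, y} = ⊤) (hxy : (x * y) ^ 2 = 1)
    (hrefl : IsReflexive x y) (hsimple : IsSimple x y)
    (hnt : ¬ IsTet G x y)
    (hden₁ : 2 * orderOf y ^ 2 > Nat.card G)
    (hden₂ : 3 * orderOf y ^ 2 ≤ 2 * Nat.card G) :
    3 * orderOf y ^ 2 = 2 * Nat.card G := by
  obtain ⟨τ, hτe, hτy⟩ := hrefl.exists_map_mul_eq_self hxy
  have he : (x * y) * (x * y) = 1 := (sq (x * y)).symm.trans hxy
  have hd := hsimple.disjoint_zpowers hxy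
  have hy := Subgroup.mem_zpowers y
  have h₁ : IsTriangleStep (x * y) y y := isTriangleStep_self he hd hden₁
  have h₂ : ¬ IsTriangleStep (x * y) y (y ^ 2) := not_isTriangleStep_sq he hd hτe hτy hden₁ hden₂
  have hconj₁ := h₁.conj_eq he hd hτe hτy hy
  have h₃ : IsTriangleStep (x * y) y (y ^ 3) := isTriangleStep_pow_three he hd hden₁ hconj₁ h₂
  have hconj₃ := h₃.conj_eq he hd hτe hτy (pow_mem hy 3)
  have hcomm : Commute (y ^ 2) (x * y * y ^ 2 * (x * y)) := commute_sq_conj_sq he hconj₁ hconj₃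
  have hcard : Nat.card G ≤ 6 * orderOf (y ^ 2) ^ 2 :=
    card_le_six_mul_sq_orderOf (closure_mul_pair_eq_top hgen) he hconj₁ hcomm
  obtain ⟨m, hm⟩ : 2 ∣ orderOf y :=
    dvd_orderOf_of_not_isTriangleStep_pow he hd hden₁ h₁ Nat.prime_two h₂
  rw [orderOf_pow_of_dvd two_ne_zero ⟨m, hm⟩, hm, Nat.mul_div_cancel_left m two_pos] at hcard
  rw [hm] at hden₂ ⊢
  linarith

end RegularMap
end
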